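/- (Wu–Zhang) Let k be a field and let H be a noetherian affine Hopf algebra over k satisfying a polynomial identity. Suppose that H is involutory (S² = Id), that H is semiprime, and that H has no finite-dimensional irreducible module whose dimension is divisible by the characteristic of k. Then H is regular, i.e., H has finite global dimension. -/

import Mathlib

open CategoryTheory

universe w v u u' u2

/-!
STATEMENT 19 (Wu–Zhang):
Let `H` be a noetherian affine Hopf algebra over a field `k` satisfying a polynomial
identity.  If `H` is involutory (`S² = Id`), semiprime, and has no finite-dimensional
irreducible module whose dimension is divisible by the characteristic of `k`, then
`H` is regular, i.e. has finite global dimension.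
-/

/-! ### Ext groups over an arbitrary ring -/

instance hasExtModuleCat (R : Type u) [Ring R] :
    HasExt.{max u (v + 1)} (ModuleCat.{v} R) :=
  letI := HasDerivedCategory.standard (ModuleCat.{v} R)
  hasExt_of_hasDerivedCategory _

/-- The canonical map `(X ⟶ Y) → Ext X Y 0` is additive. -/
lemma Ext_mk₀_add {C : Type*} [Category C] [Abelian C] [HasExt.{w} C] {X Y : C}
    (f g : X ⟶ Y) :
    Abelian.Ext.mk₀ (f + g) = Abelian.Ext.mk₀ f + Abelian.Ext.mk₀ g := by
  letI := HasDerivedCategory.standard C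
  ext
  rw [Abelian.Ext.add_hom, Abelian.Ext.mk₀_hom, Abelian.Ext.mk₀_hom, Abelian.Ext.mk₀_hom,
    Functor.map_add]
  dsimp [ShiftedHom.mk₀]
  rw [Preadditive.add_comp]

/-- The Ext-group `Ext_A^i (M, N)` for two left `A`-modules `M` and `N`. -/
noncomputable abbrev ExtGroup (A : Type u) [Ring A]
    (M : Type v) [AddCommGroup M] [Module A M]
    (N : Type w) [AddCommGroup N] [Module A N] (i : ℕ) :=
  Abelian.Ext (C := ModuleCat.{max v w u} A)
    (ModuleCat.of A (ULift.{max w u} M)) (ModuleCat.of A (ULift.{max v u} N)) i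


/-- A ring has finite global dimension if there is a uniform bound above which all
Ext-groups vanish. -/
def HasFiniteGlobalDimension (A : Type u) [Ring A] : Prop :=
  ∃ n : ℕ, ∀ (M N : Type u) [AddCommGroup M] [Module A M] [AddCommGroup N] [Module A N],
    ∀ i : ℕ, n < i → Subsingleton (ExtGroup A M N i)

/-- An algebra `A` over `k` satisfies a polynomial identity if there is a nonzero
polynomial `f` in finitely many noncommuting variables, with coefficients in `k`,
which vanishes identically on `A`. -/
def SatisfiesPolynomialIdentity (k : Type u') (A : Type u) [CommSemiring k] [Ring A]
    [Algebra k A] : Prop :=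
  ∃ (n : ℕ) (f : FreeAlgebra k (Fin n)), f ≠ 0 ∧
    ∀ v : Fin n → A, FreeAlgebra.lift k v f = 0

/-- A ring is semiprime if it has no nonzero nilpotent two-sided ideals;
equivalently, `a R a = 0` implies `a = 0`. -/
def IsSemiprimeRing (R : Type u) [Ring R] : Prop :=
  ∀ a : R, (∀ x : R, a * x * a = 0) → a = 0


theorem WZ_polarize {k : Type u'} [Field k] {R : Type u} [Ring R] [Algebra k R] (n d m : ℕ)
    (w : Fin d → Fin n) (u : Fin m → Fin n) (y : Fin d → R) :
    ∑ U : Finset (Fin d), (-1 : k) ^ U.card •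
      (List.ofFn fun j => ∑ t, if t ∉ U ∧ w t = u j then y t else 0).prod =
    ∑ τ : Fin m → Fin d, (if Function.Surjective τ ∧ ∀ j, w (τ j) = u j then (1 : k) else 0) •
      (List.ofFn fun j => y (τ j)).prod := by
  classical
  have h1 : ∀ U : Finset (Fin d),
      (List.ofFn fun j => ∑ t, if t ∉ U ∧ w t = u j then y t else 0).prod =
      ∑ τ : Fin m → Fin d, (if (∀ j, τ j ∉ U ∧ w (τ j) = u j) then (1 : k) else 0) •
        (List.ofFn fun j => y (τ j)).prod := by
    intro U
    have := (MultilinearMap.mkPiAlgebraFin k m R).map_sum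
      (fun j t => (if t ∉ U ∧ w t = u j then (1 : k) else 0) • y t)
    simp only [MultilinearMap.map_smul_univ, MultilinearMap.mkPiAlgebraFin_apply] at this
    simp only [ite_smul, one_smul, zero_smul] at this
    rw [this]
    refine Finset.sum_congr rfl fun τ _ => ?_
    rw [Finset.prod_ite_zero]
    simp [ite_smul]
  simp_rw [h1, Finset.smul_sum]
  rw [Finset.sum_comm]
  refine Finset.sum_congr rfl fun τ _ => ?_
  simp_rw [smul_smul]
  rw [← Finset.sum_smul]
  congr 1
  have h2 : ∀ U : Finset (Fin d), (-1 : k) ^ U.card *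
      (if (∀ j, τ j ∉ U ∧ w (τ j) = u j) then (1 : k) else 0) =
      (if ∀ j, w (τ j) = u j then (1 : k) else 0) *
        (if U ∈ ((Finset.univ.image τ)ᶜ).powerset then (-1) ^ U.card else 0) := by
    intro U
    have : U ∈ ((Finset.univ.image τ)ᶜ).powerset ↔ ∀ j, τ j ∉ U := by
      simp only [Finset.mem_powerset, Finset.subset_iff, Finset.mem_compl, Finset.mem_image]
      constructor
      · intro h j hj; exact h hj ⟨j, by simp⟩
      · rintro h x hx ⟨j, -, rfl⟩; exact h j hx
    rw [if_congr this rfl rfl]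
    by_cases ha : ∀ j, w (τ j) = u j <;> by_cases hb : ∀ j, τ j ∉ U <;> simp [ha, hb, forall_and]
  simp_rw [h2, ← Finset.mul_sum]
  rw [Finset.sum_ite_mem, Finset.univ_inter]
  have h3 := Finset.sum_powerset_neg_one_pow_card (x := (Finset.univ.image τ)ᶜ)
  have h4 : ∑ m ∈ ((Finset.univ.image τ)ᶜ).powerset, (-1 : k) ^ m.card =
      if (Finset.univ.image τ)ᶜ = ∅ then 1 else 0 := by
    have := congrArg (Int.cast : ℤ → k) h3
    push_cast at this
    exact this
  rw [h4]
  have h5 : (Finset.univ.image τ)ᶜ = ∅ ↔ Function.Surjective τ := by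
    rw [Finset.compl_eq_empty_iff, Finset.eq_univ_iff_forall]
    simp [Function.Surjective]
  rw [if_congr h5 rfl rfl]
  by_cases ha : ∀ j, w (τ j) = u j <;> by_cases hb : Function.Surjective τ <;> simp [ha, hb]

theorem WZ_multilinearize {k : Type u'} [Field k] {R : Type u} [Ring R] [Algebra k R]
    (n : ℕ) (f : FreeAlgebra k (Fin n)) (hf : f ≠ 0)
    (h : ∀ v : Fin n → R, FreeAlgebra.lift k v f = 0) :
    ∃ (d : ℕ) (α : Equiv.Perm (Fin d) → k), α 1 ≠ 0 ∧
      ∀ x : Fin d → R, ∑ σ, α σ • (List.ofFn fun i => x (σ i)).prod = 0 := by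
  classical
  let g := FreeAlgebra.equivMonoidAlgebraFreeMonoid (R := k) (X := Fin n) f
  have hg : g ≠ 0 := by
    intro h0; exact hf (FreeAlgebra.equivMonoidAlgebraFreeMonoid.injective (by rw [map_zero]; exact h0))
  have hev : ∀ v : Fin n → R, ∑ u ∈ g.coeff.support, g.coeff u • (u.toList.map v).prod = 0 := by
    intro v
    rw [← h v]
    have h1 : FreeAlgebra.lift k v f = MonoidAlgebra.lift k R (FreeMonoid (Fin n)) (FreeMonoid.lift v) g := by
      have : FreeAlgebra.lift k v = (MonoidAlgebra.lift k R (FreeMonoid (Fin n)) (FreeMonoid.lift v)).comp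
          (FreeAlgebra.equivMonoidAlgebraFreeMonoid (R := k) (X := Fin n)).toAlgHom := by
        ext x
        simp [FreeAlgebra.equivMonoidAlgebraFreeMonoid]
      rw [this]; rfl
    rw [h1, MonoidAlgebra.lift_apply, Finsupp.sum]
    refine Finset.sum_congr rfl fun u _ => ?_
    rw [FreeMonoid.lift_apply]
  obtain ⟨w, hw, hmax⟩ := Finset.exists_max_image g.coeff.support (fun u => u.toList.length)
    (by rw [Finset.nonempty_iff_ne_empty, Ne, Finsupp.support_eq_empty]; simpa using hg)
  set d := w.toList.length with hd
  refine ⟨d, fun σ => g.coeff (FreeMonoid.ofList (List.ofFn fun i => w.toList.get (σ i))), ?_, ?_⟩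
  · have h0 : (List.ofFn fun i : Fin d => w.toList.get ((1 : Equiv.Perm (Fin d)) i)) = w.toList :=
      List.ofFn_get _
    simp only [h0]
    simpa using hw
  · intro y
    have key : ∑ U : Finset (Fin d), (-1 : k) ^ U.card •
        ∑ u ∈ g.coeff.support, g.coeff u • (u.toList.map (fun i => ∑ t : Fin d,
          if t ∉ U ∧ w.toList.get t = i then y t else 0)).prod = 0 := by
      simp_rw [hev, smul_zero, Finset.sum_const_zero]
    have h2 : ∀ u : FreeMonoid (Fin n), ∀ U : Finset (Fin d), (u.toList.map (fun i => ∑ t : Fin d,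
          if t ∉ U ∧ w.toList.get t = i then y t else 0)) =
          (List.ofFn fun j => ∑ t, if t ∉ U ∧ w.toList.get t = u.toList.get j then y t else 0) := by
      intro u U
      conv_lhs => rw [← List.ofFn_get u.toList]
      rw [List.map_ofFn]; rfl
    simp_rw [h2, Finset.smul_sum] at key
    rw [Finset.sum_comm] at key
    simp_rw [smul_comm ((-1 : k) ^ _) (g.coeff _), ← Finset.smul_sum, WZ_polarize] at key
    rw [← key]
    have h3 : ∀ u ∈ g.coeff.support, (∑ τ : Fin u.toList.length → Fin d,
        (if Function.Surjective τ ∧ ∀ j, w.toList.get (τ j) = u.toList.get j then (1 : k) else 0) •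
        (List.ofFn fun j => y (τ j)).prod) =
        ∑ σ : Equiv.Perm (Fin d), if FreeMonoid.ofList (List.ofFn fun i => w.toList.get (σ i)) = u then
          (List.ofFn fun j => y (σ j)).prod else 0 := by
      intro u hu
      have hle := hmax u hu
      by_cases hlt : u.toList.length = d
      · generalize hL : u.toList = L at *
        obtain ⟨u', rfl⟩ : ∃ u' : Fin d → Fin n, L = List.ofFn u' := by
          refine ⟨fun i => L.get (Fin.cast hlt.symm i), ?_⟩
          apply List.ext_get
          · simp [hlt]
          · intro i h1 h2; simp
        obtain rfl : u = FreeMonoid.ofList (List.ofFn u') := by rw [← hL]; rfl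
        have h5 : ∀ (e : ℕ) (he : e = d) (v' : Fin e → Fin n) (hv : ∀ i, v' i = u' (Fin.cast he i)),
          (∑ τ : Fin e → Fin d,
        (if Function.Surjective τ ∧ ∀ j, w.toList.get (τ j) = v' j then (1 : k) else 0) •
        (List.ofFn fun j => y (τ j)).prod) = ∑ σ : Equiv.Perm (Fin d), if (∀ i, w.toList.get (σ i) = u' i) then
          (List.ofFn fun j => y (σ j)).prod else 0 := by
          intro e he v' hv
          subst he
          simp only [Fin.cast_eq_self] at hv
          simp only [hv]
          symm
          rw [← Finset.sum_filter]
          simp only [ite_smul, one_smul, zero_smul]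
          rw [← Finset.sum_filter]
          refine Finset.sum_bij (fun σ _ => (fun i => σ i)) ?_ ?_ ?_ ?_
          · intro σ hσ; simp at hσ ⊢; exact ⟨σ.surjective, hσ⟩
          · intro a _ b _ hab; exact Equiv.coe_fn_injective hab
          · intro τ hτ
            simp at hτ
            refine ⟨Equiv.ofBijective τ ⟨Finite.injective_iff_surjective.2 hτ.1, hτ.1⟩, ?_, rfl⟩
            simp
            exact hτ.2
          · intros; rfl
        rw [h5 _ (by simp) _ (by intro i; simp; rfl)]
        refine Finset.sum_congr rfl fun σ _ => ?_
        refine if_congr ?_ rfl rfl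
        rw [FreeMonoid.ofList.injective.eq_iff, List.ofFn_inj, funext_iff]
      · rw [Finset.sum_eq_zero, Finset.sum_eq_zero]
        · intro σ _
          rw [if_neg]
          rintro rfl
          exact hlt (by simp)
        · intro τ _
          rw [if_neg, zero_smul]
          rintro ⟨h1, -⟩
          have := Fintype.card_le_of_surjective τ h1
          simp at this
          omega
    symm
    calc _ = ∑ u ∈ g.coeff.support, g.coeff u • ∑ σ : Equiv.Perm (Fin d),
          if FreeMonoid.ofList (List.ofFn fun i => w.toList.get (σ i)) = u then
          (List.ofFn fun j => y (σ j)).prod else 0 :=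
            Finset.sum_congr rfl fun u hu => by rw [h3 u hu]
      _ = _ := ?_
    simp_rw [Finset.smul_sum]
    rw [Finset.sum_comm]
    refine Finset.sum_congr rfl fun σ _ => ?_
    simp_rw [smul_ite, smul_zero]
    rw [Finset.sum_ite_eq]
    split_ifs with h6
    · rfl
    · rw [Finsupp.notMem_support_iff.1 h6, zero_smul]



theorem WZ_nil_eq_zero {R : Type u} [Ring R] [IsNoetherianRing R]
    (hs : ∀ a : R, (∀ x : R, a * x * a = 0) → a = 0) (I : Set R)
    (hI : ∀ a ∈ I, ∀ x, a * x ∈ I) (hnil : ∀ a ∈ I, IsNilpotent a) :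
    ∀ a ∈ I, a = 0 := by
  by_contra! hcon
  obtain ⟨a0, ha0, ha0'⟩ := hcon
  let F : Set (Ideal R) := {J | ∃ a ∈ I, a ≠ 0 ∧ J = LinearMap.ker (LinearMap.toSpanSingleton R R a)}
  obtain ⟨J, ⟨a, haI, ha, rfl⟩, hmax⟩ := set_has_maximal_iff_noetherian.mpr ‹IsNoetherianRing R› F
    ⟨_, a0, ha0, ha0', rfl⟩
  refine ha (hs a fun x => ?_)
  have hpow : ∀ n : ℕ, (a * x) ^ (n + 1) ∈ I := by
    intro n
    rw [pow_succ', mul_assoc]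
    exact hI a haI _
  obtain ⟨n, hn⟩ := hnil _ (hI a haI x)
  classical
  have hex : ∃ n, (a * x) ^ n = 0 := ⟨n, hn⟩
  have hspec := Nat.find_spec hex
  rcases hm : Nat.find hex with _ | m
  · rw [hm, pow_zero] at hspec
    rw [← mul_one (a * x * a), hspec, mul_zero]
  · rw [hm] at hspec
    rcases m with _ | m
    · rw [zero_add, pow_one] at hspec
      rw [hspec, zero_mul]
    · have hne : (a * x) ^ (m + 1) ≠ 0 := Nat.find_min hex (by omega)
      have hle : LinearMap.ker (LinearMap.toSpanSingleton R R a) ≤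
          LinearMap.ker (LinearMap.toSpanSingleton R R ((a * x) ^ (m + 1))) := by
        intro y hy
        simp only [LinearMap.mem_ker, LinearMap.toSpanSingleton_apply, smul_eq_mul] at hy ⊢
        rw [pow_succ', ← mul_assoc, ← mul_assoc, hy, zero_mul, zero_mul]
      have hnlt := hmax _ ⟨_, hpow m, hne, rfl⟩
      have heq := hle.eq_of_not_lt hnlt
      have : a * x ∈ LinearMap.ker (LinearMap.toSpanSingleton R R ((a * x) ^ (m + 1))) := by
        simp only [LinearMap.mem_ker, LinearMap.toSpanSingleton_apply, smul_eq_mul]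
        rw [← pow_succ', hspec]
      rw [← heq] at this
      simpa using this

open Polynomial in
theorem WZ_exists_maximal {R : Type u} [Ring R] [IsNoetherianRing R]
    (hs : ∀ a : R, (∀ x : R, a * x * a = 0) → a = 0) (r : R) (hr : r ≠ 0) :
    ∃ m : Ideal R[X], m.IsMaximal ∧ C r ∉ m := by
  by_contra! hcon
  apply hr
  refine WZ_nil_eq_zero hs {a | C a ∈ Ring.jacobson R[X]} ?_ ?_ r ?_
  · intro a ha x
    simp only [Set.mem_setOf_eq, C_mul] at ha ⊢
    exact Ideal.mul_mem_right _ _ ha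
  · intro a ha
    simp only [Set.mem_setOf_eq] at ha
    rw [← Ideal.jacobson_bot, Ideal.mem_jacobson_iff] at ha
    obtain ⟨z, hz⟩ := ha (-X)
    have hz' : z = 1 + z * C a * X := by
      rw [Ideal.mem_bot] at hz
      have h2 : z * X * C a = z * C a * X := by
        rw [mul_assoc, X_mul_C, mul_assoc]
      have h1 : -(z * X * C a) + z - 1 = 0 := by simpa using hz
      rw [h2] at h1
      have h3 := eq_of_sub_eq_zero h1
      rw [← h3]; abel
    have hco : ∀ n, z.coeff n = a ^ n := by
      intro n
      induction n with
      | zero => rw [hz']; simp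
      | succ n ih =>
        rw [hz', coeff_add, coeff_mul_X, coeff_mul_C, ih, coeff_one]
        simp [pow_succ]
    exact ⟨z.natDegree + 1, by rw [← hco, coeff_eq_zero_of_natDegree_lt (Nat.lt_succ_self _)]⟩
  · simp only [Set.mem_setOf_eq, Ring.jacobson_eq_sInf_isMaximal, Submodule.mem_sInf]
    intro m hm
    exact hcon m hm


/-- maximal commutative subset -/
theorem WZ_exists_max_comm (D : Type v) [Ring D] :
    ∃ s : Set D, Set.centralizer s = s := by
  let F : Set (Set D) := {s | ∀ a ∈ s, ∀ b ∈ s, a * b = b * a}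
  obtain ⟨s, hs⟩ := zorn_subset F (by
    intro c hc hchain
    refine ⟨⋃₀ c, ?_, fun s hs => Set.subset_sUnion_of_mem hs⟩
    rintro a ⟨s, hs, has⟩ b ⟨t, ht, hbt⟩
    rcases hchain.total hs ht with h | h
    · exact hc ht a (h has) b hbt
    · exact hc hs a has b (h hbt))
  refine ⟨s, ?_⟩
  have hsF : ∀ a ∈ s, ∀ b ∈ s, a * b = b * a := hs.prop
  apply Set.Subset.antisymm
  · intro x hx
    have h1 : insert x s ∈ F := by
      rintro a (rfl | ha) b (rfl | hb)
      · rfl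
      · exact (hx b hb).symm
      · exact hx a ha
      · exact hsF a ha b hb
    exact hs.le_of_ge h1 (Set.subset_insert x s) (Set.mem_insert x s)
  · intro x hx y hy
    exact hsF y hy x hx

theorem WZ_rep_aux (S : Type u) [Ring S] (M : Type v) [AddCommGroup M] [Module S M]
    [IsSimpleModule S M] :
    ∃ (L : Type v) (_ : Field L) (_ : Module L M) (_ : SMulCommClass S L M),
      ∀ f : Module.End S M, (∀ (l : L) (m : M), f (l • m) = l • f m) → ∃ l : L, ∀ m, f m = l • m := by
  classical
  obtain ⟨s, hs⟩ := WZ_exists_max_comm (Module.End S M)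
  let L := Subring.centralizer s
  have hmem : ∀ x, x ∈ L ↔ x ∈ s := by
    intro x
    have h0 : x ∈ L ↔ x ∈ Set.centralizer s := Iff.rfl
    rw [h0, hs]
  have hcomm : ∀ a b : L, a * b = b * a := by
    intro a b
    apply Subtype.ext
    have ha := (hmem _).1 a.2
    exact Subring.mem_centralizer_iff.1 b.2 _ ha
  letI : CommRing L := { (inferInstance : Ring L) with mul_comm := hcomm }
  have hfield : IsField L := by
    refine ⟨⟨0, 1, ?_⟩, hcomm, ?_⟩
    · intro h
      have := congrArg Subtype.val h
      exact zero_ne_one this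
    · intro a ha
      have ha' : (a : Module.End S M) ≠ 0 := fun h => ha (Subtype.ext h)
      refine ⟨⟨(a : Module.End S M)⁻¹, ?_⟩, ?_⟩
      · rw [Subring.mem_centralizer_iff]
        intro g hg
        have h := Subring.mem_centralizer_iff.1 a.2 g hg
        have hc : Commute g (a : Module.End S M) := h
        exact hc.inv_right₀
      · apply Subtype.ext
        exact mul_inv_cancel₀ ha'
  letI : Field L := hfield.toField
  letI : Module L M := inferInstanceAs (Module (Subring.centralizer s) M)
  refine ⟨L, inferInstance, inferInstance, ⟨?_⟩, ?_⟩
  · intro t l m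
    exact (LinearMap.map_smul (l : Module.End S M) t m).symm
  · intro f hf
    refine ⟨⟨f, ?_⟩, fun m => rfl⟩
    rw [Subring.mem_centralizer_iff]
    intro g hg
    ext m
    exact (hf ⟨g, (hmem g).2 hg⟩ m).symm


theorem WZ_staircase {L : Type*} {M : Type*} [Field L] [AddCommGroup M] [Module L M]
    (d : ℕ) (v : ℕ → M) (b : ℕ → Module.End L M)
    (hb : ∀ j < d, ∀ i ≤ d, b j (v i) = if i = j + 1 then v j else 0) :
    ∀ (m e : ℕ) (_ : e ≤ d) (τ : Fin m → ℕ) (_ : ∀ i, τ i < d),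
      (List.ofFn fun i => b (τ i)).prod (v e) =
        if (∀ i : Fin m, τ i + m = e + i) then v (e - m) else 0 := by
  intro m
  induction m with
  | zero => intro e he τ hτ; simp
  | succ m ih =>
    intro e he τ hτ
    rw [List.ofFn_succ', List.concat_eq_append, List.prod_append, List.prod_singleton, Module.End.mul_apply,
      hb _ (hτ _) _ he]
    by_cases h : e = τ (Fin.last m) + 1
    · rw [if_pos h, ih _ (by omega) (fun i => τ i.castSucc) (fun i => hτ _)]
      have heq : (∀ i : Fin m, τ i.castSucc + m = τ (Fin.last m) + i) ↔
          ∀ i : Fin (m + 1), τ i + (m + 1) = e + i := by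
        rw [Fin.forall_fin_succ']
        constructor
        · intro h1
          refine ⟨fun i => ?_, ?_⟩
          · have := h1 i; simp; omega
          · simp; omega
        · rintro ⟨h1, -⟩ i
          have := h1 i; simp at this; omega
      have h2 : τ (Fin.last m) - m = e - (m + 1) := by omega
      simp only [heq, h2]
    · rw [if_neg h, if_neg, map_zero]
      intro h1
      have := h1 (Fin.last m)
      simp at this
      omega

theorem WZ_multilin_span {L : Type*} {E : Type*} [Field L] [Ring E] [Algebra L E]
    (W : Set E) (d : ℕ) (α : Equiv.Perm (Fin d) → L)
    (h : ∀ x : Fin d → E, (∀ i, x i ∈ W) → ∑ σ, α σ • (List.ofFn fun i => x (σ i)).prod = 0)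
    (x : Fin d → E) (hx : ∀ i, x i ∈ Submodule.span L W) :
    ∑ σ, α σ • (List.ofFn fun i => x (σ i)).prod = 0 := by
  classical
  let F : MultilinearMap L (fun _ : Fin d => E) E :=
    ∑ σ, α σ • (MultilinearMap.mkPiAlgebraFin L d E).domDomCongr σ
  have hF : ∀ x, F x = ∑ σ, α σ • (List.ofFn fun i => x (σ i)).prod := by
    intro x; simp [F]
  rw [← hF]
  have key : ∀ (T : Finset (Fin d)) (x : Fin d → E), (∀ i ∈ T, x i ∈ Submodule.span L W) →
      (∀ i ∉ T, x i ∈ W) → F x = 0 := by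
    intro T
    induction T using Finset.induction_on with
    | empty => intro x _ h2; rw [hF]; exact h x fun i => h2 i (by simp)
    | insert j T hj ih =>
      intro x h1 h2
      have : ∀ y ∈ Submodule.span L W, F (Function.update x j y) = 0 := by
        intro y hy
        induction hy using Submodule.span_induction with
        | mem y hy =>
          apply ih
          · intro i hi
            have : i ≠ j := fun h => hj (h ▸ hi)
            rw [Function.update_of_ne this]
            exact h1 i (Finset.mem_insert_of_mem hi)
          · intro i hi
            by_cases hij : i = j
            · subst hij; simpa using hy
            · rw [Function.update_of_ne hij]
              exact h2 i (by simp [hij, hi])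
        | zero => simp
        | add a b _ _ ha hb => rw [F.map_update_add, ha, hb, add_zero]
        | smul c a _ ha => rw [F.map_update_smul, ha, smul_zero]
      have h3 := this (x j) (h1 j (Finset.mem_insert_self _ _))
      rwa [Function.update_eq_self] at h3
  exact key Finset.univ x (fun i _ => hx i) (by simp)

theorem WZ_rep_fin {k : Type u'} [Field k] (S : Type u) [Ring S] [Algebra k S] (M : Type v)
    [AddCommGroup M] [Module S M] [IsSimpleModule S M] (L : Type v) [Field L] [Module L M]
    [SMulCommClass S L M]
    (hL : ∀ f : Module.End S M, (∀ (l : L) (m : M), f (l • m) = l • f m) → ∃ l : L, ∀ m, f m = l • m)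
    (d : ℕ) (α : Equiv.Perm (Fin d) → k) (hα1 : α 1 ≠ 0)
    (hα : ∀ x : Fin d → S, ∑ σ, α σ • (List.ofFn fun i => x (σ i)).prod = 0) :
    FiniteDimensional L M ∧ Module.finrank L M ≤ d ∧
      Submodule.span L (Set.range (Module.toModuleEnd L (S := S) M)) = ⊤ ∧
      ∀ z : S, (∀ s, z * s = s * z) → ∃ l : L, ∀ m : M, z • m = l • m := by
  classical
  have hcent : ∀ z : S, (∀ s, z * s = s * z) → ∃ l : L, ∀ m : M, z • m = l • m := by
    intro z hz
    exact hL { toFun := fun m => z • m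
               map_add' := fun a b => smul_add z a b
               map_smul' := fun s m => by simp [← mul_smul, hz] }
      (fun l m => smul_comm z l m)
  set φ := Module.toModuleEnd L (S := S) M with hφ
  have hφa : ∀ s m, φ s m = s • m := fun s m => rfl
  let B : Subalgebra L (Module.End L M) := Algebra.adjoin L (Set.range φ)
  have hB : Subalgebra.toSubmodule B = Submodule.span L (Set.range φ) := by
    have h1 : (Set.range φ) = ((MonoidHom.mrange (φ : S →* Module.End L M) : Submonoid _) : Set _) := by
      ext; simp
    rw [Algebra.adjoin_eq_span, h1, Submonoid.closure_eq]
  have hφB : ∀ s, φ s ∈ B := fun s => Algebra.subset_adjoin ⟨s, rfl⟩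
  have hnt : Nontrivial M := IsSimpleModule.nontrivial S M
  have hsimp : IsSimpleModule B M := by
    rw [isSimpleModule_iff_toSpanSingleton_surjective]
    refine ⟨hnt, fun m hm y => ?_⟩
    obtain ⟨s, hs⟩ := IsSimpleModule.toSpanSingleton_surjective S hm y
    exact ⟨⟨φ s, hφB s⟩, hs⟩
  have hdens : ∀ (f : Module.End L M) (s : Finset M), ∃ b ∈ B, ∀ m ∈ s, f m = b m := by
    intro f s
    have hEnd : ∀ g : Module.End B M, ∃ l : L, ∀ m, g m = l • m := by
      intro g
      refine hL { toFun := g, map_add' := map_add g, map_smul' := fun s m => ?_ } (fun l m => ?_)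
      · exact g.map_smul (⟨φ s, hφB s⟩ : B) m
      · exact g.map_smul (algebraMap L B l) m
    let f' : Module.End (Module.End B M) M :=
      { toFun := f, map_add' := map_add f
        map_smul' := fun g m => by
          obtain ⟨l, hl⟩ := hEnd g
          simp [hl] }
    obtain ⟨b, hb⟩ := jacobson_density f' s
    exact ⟨b, b.2, hb⟩
  have hk : ∀ a : k, ∃ l : L, ∀ m : M, (algebraMap k S a) • m = l • m :=
    fun a => hcent _ fun s => Algebra.commutes a s
  choose ι hι using hk
  have hid : ∀ x : Fin d → Module.End L M, (∀ i, x i ∈ B) →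
      ∑ σ, ι (α σ) • (List.ofFn fun i => x (σ i)).prod = 0 := by
    intro x hx
    apply WZ_multilin_span (Set.range φ) d (fun σ => ι (α σ)) ?_ x
    · intro i
      rw [← hB]; exact hx i
    · intro x hx
      choose y hy using hx
      have h1 := congrArg φ (hα y)
      rw [map_sum, map_zero] at h1
      rw [← h1]
      refine Finset.sum_congr rfl fun σ _ => ?_
      ext m
      rw [Algebra.smul_def (α σ), map_mul φ, Module.End.mul_apply, hφa, hι, map_list_prod, List.map_ofFn]
      simp only [LinearMap.smul_apply]
      congr 3
      have : (fun i => x (σ i)) = (φ ∘ fun i => y (σ i)) := by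
        funext i; simp [hy]
      rw [this]
  have hrank : Module.rank L M ≤ d := by
    apply rank_le
    intro s hs
    by_contra! hcard
    obtain ⟨e⟩ : Nonempty (Fin (d + 1) ↪ s) := by
      apply Function.Embedding.nonempty_of_card_le
      simpa using hcard
    let v : Fin (d + 1) → M := fun i => (e i : M)
    have hv : LinearIndependent L v := hs.comp e e.injective
    obtain ⟨g, hg⟩ := (Finsupp.linearCombination L v).exists_leftInverse_of_injective
      (LinearMap.ker_eq_bot.2 hv)
    have hgv : ∀ i, g (v i) = Finsupp.single i 1 := by
      intro i
      have := LinearMap.congr_fun hg (Finsupp.single i 1)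
      simpa using this
    let v' : ℕ → M := fun i => if h : i < d + 1 then v ⟨i, h⟩ else 0
    let f : ℕ → Module.End L M := fun j =>
      (Finsupp.linearCombination L (fun i : Fin (d + 1) => if (i : ℕ) = j + 1 then v' j else 0)) ∘ₗ g
    have hf : ∀ j, ∀ i ≤ d, f j (v' i) = if i = j + 1 then v' j else 0 := by
      intro j i hi
      have h1 : v' i = v ⟨i, Nat.lt_succ_of_le hi⟩ := dif_pos _
      simp only [f, LinearMap.comp_apply]
      rw [h1, hgv, Finsupp.linearCombination_single, one_smul]
    choose b hbB hb using fun j => hdens (f j) (Finset.univ.image v)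
    have hst := WZ_staircase d v' b (fun j hj i hi => by
      rw [← hf j i hi, hb]
      rw [show v' i = v ⟨i, Nat.lt_succ_of_le hi⟩ from dif_pos _]
      exact Finset.mem_image_of_mem _ (Finset.mem_univ _)) d d le_rfl
    have h2 := LinearMap.congr_fun (hid (fun i => b i) (fun i => hbB _)) (v' d)
    rw [LinearMap.sum_apply, Finset.sum_eq_single 1] at h2
    · simp only [LinearMap.smul_apply] at h2
      have h3 := hst (fun i => ((1 : Equiv.Perm (Fin d)) i : ℕ)) (fun i => by simp)
      rw [h3, if_pos (by intro i; simp [add_comm])] at h2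
      have hv0 : v' (d - d) ≠ 0 := by
        have : v' (d - d) = v 0 := by simp [v']
        rw [this]; exact hv.ne_zero 0
      have hι0 : ι (α 1) ≠ 0 := by
        intro h0
        obtain ⟨m, hm⟩ := exists_ne (0 : M)
        apply hm
        have h4 := hι (α 1) ((algebraMap k S (α 1)⁻¹) • m)
        rw [h0, zero_smul, ← mul_smul, ← map_mul, mul_inv_cancel₀ hα1, map_one, one_smul] at h4
        exact h4
      rcases smul_eq_zero.1 h2 with h5 | h5
      · exact hι0 h5
      · exact hv0 h5
    · intro σ _ hσ
      have h3 := hst (fun i => ((σ i : Fin d) : ℕ)) (fun i => (σ i).2)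
      rw [LinearMap.smul_apply, h3, if_neg, smul_zero]
      intro h4
      apply hσ
      ext i
      have := h4 i
      simp; omega
    · simp
  have hfin : FiniteDimensional L M := by
    rw [FiniteDimensional, ← Module.rank_lt_aleph0_iff]
    exact lt_of_le_of_lt hrank (Cardinal.natCast_lt_aleph0)
  refine ⟨hfin, ?_, ?_, hcent⟩
  · rw [← Module.finrank_eq_rank] at hrank
    exact_mod_cast hrank
  · rw [← hB, eq_top_iff]
    intro f _
    obtain ⟨s, hs⟩ := hfin.fg_top
    obtain ⟨b, hbB, hb⟩ := hdens f s
    have : f = b := LinearMap.ext_on hs (fun m hm => hb m hm)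
    rw [this]; exact hbB


open Polynomial in
theorem WZ_ofFn_monomial {R : Type u} [Ring R] : ∀ (d : ℕ) (n : Fin d → ℕ) (a : Fin d → R),
    (List.ofFn fun i => monomial (n i) (a i)).prod = monomial (∑ i, n i) (List.ofFn a).prod := by
  intro d
  induction d with
  | zero => intro n a; simp
  | succ d ih =>
    intro n a
    rw [List.ofFn_succ, List.ofFn_succ, List.prod_cons, List.prod_cons, ih, monomial_mul_monomial,
      Fin.sum_univ_succ]

open Polynomial in
theorem WZ_identity_poly {k : Type u'} [Field k] {R : Type u} [Ring R] [Algebra k R]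
    (d : ℕ) (α : Equiv.Perm (Fin d) → k)
    (hα : ∀ x : Fin d → R, ∑ σ, α σ • (List.ofFn fun i => x (σ i)).prod = 0)
    (x : Fin d → R[X]) : ∑ σ, α σ • (List.ofFn fun i => x (σ i)).prod = 0 := by
  apply WZ_multilin_span {p : R[X] | ∃ n a, p = monomial n a}
  · intro x hx
    choose n a hna using hx
    simp_rw [hna, WZ_ofFn_monomial]
    have : ∀ σ : Equiv.Perm (Fin d), ∑ i, n (σ i) = ∑ i, n i := fun σ => Equiv.sum_comp σ n
    simp_rw [this, smul_monomial, ← map_sum, hα, map_zero]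
  · intro i
    rw [(x i).as_sum_support]
    exact Submodule.sum_mem _ fun n _ => Submodule.subset_span ⟨_, _, rfl⟩

open Polynomial in
theorem WZ_matrix_aux {R : Type u} [Ring R] (M : Type v) [AddCommGroup M] [Module R[X] M]
    (L : Type v) [Field L] [Module L M] [SMulCommClass R[X] L M] [FiniteDimensional L M]
    (hspan : Submodule.span L (Set.range (Module.toModuleEnd L (S := R[X]) M)) = ⊤)
    (hcent : ∀ z : R[X], (∀ s, z * s = s * z) → ∃ l : L, ∀ m : M, z • m = l • m)
    (r : R) (m : M) (hr : (C r : R[X]) • m ≠ 0) :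
    ∃ (ρ : R →+* Matrix (Fin (Module.finrank L M)) (Fin (Module.finrank L M)) L),
      ρ r ≠ 0 ∧ Submodule.span L (Set.range ρ) = ⊤ := by
  let b := Module.finBasis L M
  let e := LinearMap.toMatrixAlgEquiv b
  let φ := Module.toModuleEnd L (S := R[X]) M
  let e' : Module.End L M →+* Matrix (Fin (Module.finrank L M)) (Fin (Module.finrank L M)) L :=
    e.toRingEquiv.toRingHom
  refine ⟨e'.comp (φ.comp (C : R →+* R[X])), ?_, ?_⟩
  · intro h0
    have h1 : φ (C r) = 0 := e.injective (by rw [map_zero]; exact h0)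
    exact hr (LinearMap.congr_fun h1 m)
  · have h1 : Submodule.span L (Set.range (φ.comp (C : R →+* R[X]))) = ⊤ := by
      rw [eq_top_iff, ← hspan, Submodule.span_le]
      rintro _ ⟨p, rfl⟩
      obtain ⟨l, hl⟩ := hcent X (fun s => X_mul)
      have hX : φ X = algebraMap L _ l := by
        ext x; exact hl x
      change φ p ∈ Submodule.span L (Set.range (φ.comp (C : R →+* R[X])))
      induction p using Polynomial.induction_on' with
      | add p q hp hq => rw [map_add]; exact Submodule.add_mem _ hp hq
      | monomial n a =>
        rw [← C_mul_X_pow_eq_monomial, map_mul, map_pow, hX, ← map_pow, ← Algebra.commutes,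
          ← Algebra.smul_def]
        exact Submodule.smul_mem _ _ (Submodule.subset_span ⟨a, rfl⟩)
    have h2 : Set.range (e'.comp (φ.comp (C : R →+* R[X]))) =
        e.toLinearMap '' Set.range (φ.comp (C : R →+* R[X])) := by
      rw [← Set.range_comp]; rfl
    rw [h2, Submodule.span_image, h1, Submodule.map_top, LinearMap.range_eq_top]
    exact e.surjective

open Polynomial in
theorem WZ_matrix_rep {k : Type u'} [Field k] {R : Type u} [Ring R] [Algebra k R]
    [IsNoetherianRing R]
    (hs : ∀ a : R, (∀ x : R, a * x * a = 0) → a = 0)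
    (d : ℕ) (α : Equiv.Perm (Fin d) → k) (hα1 : α 1 ≠ 0)
    (hα : ∀ x : Fin d → R, ∑ σ, α σ • (List.ofFn fun i => x (σ i)).prod = 0)
    (r : R) (hr : r ≠ 0) :
    ∃ (L : Type u) (_ : Field L) (n : ℕ) (_ : n ≤ d) (ρ : R →+* Matrix (Fin n) (Fin n) L),
      ρ r ≠ 0 ∧ Submodule.span L (Set.range ρ) = ⊤ := by
  obtain ⟨m, hm, hrm⟩ := WZ_exists_maximal hs r hr
  have hsimp : IsSimpleModule R[X] (R[X] ⧸ m) := by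
    rw [isSimpleModule_iff_isCoatom]; exact hm.out
  obtain ⟨L, _, _, _, hL⟩ := WZ_rep_aux R[X] (R[X] ⧸ m)
  obtain ⟨hfin, hrank, hspan, hcent⟩ := WZ_rep_fin (k := k) R[X] (R[X] ⧸ m) L hL d α hα1
    (WZ_identity_poly d α hα)
  obtain ⟨ρ, h1, h2⟩ := WZ_matrix_aux (R[X] ⧸ m) L hspan hcent r (Submodule.Quotient.mk 1) (by
    rw [← Submodule.Quotient.mk_smul, Ne, Submodule.Quotient.mk_eq_zero]
    simpa using hrm)
  exact ⟨L, inferInstance, _, hrank, ρ, h1, h2⟩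


theorem WZ_mlin_zero {L : Type*} {E G : Type*} [Field L] [AddCommGroup E] [Module L E]
    [AddCommGroup G] [Module L G] (d : ℕ) (F : MultilinearMap L (fun _ : Fin d => E) G)
    (W : Set E)
    (h : ∀ x : Fin d → E, (∀ i, x i ∈ W) → F x = 0)
    (hW : Submodule.span L W = ⊤) (x : Fin d → E) : F x = 0 := by
  classical
  have key : ∀ (T : Finset (Fin d)) (x : Fin d → E), (∀ i ∉ T, x i ∈ W) → F x = 0 := by
    intro T
    induction T using Finset.induction_on with
    | empty => intro x h2; exact h x fun i => h2 i (by simp)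
    | insert j T hj ih =>
      intro x h2
      have : ∀ y ∈ Submodule.span L W, F (Function.update x j y) = 0 := by
        intro y hy
        induction hy using Submodule.span_induction with
        | mem y hy =>
          apply ih
          intro i hi
          by_cases hij : i = j
          · subst hij; simpa using hy
          · rw [Function.update_of_ne hij]
            exact h2 i (by simp [hij, hi])
        | zero => simp
        | add a b _ _ ha hb => rw [F.map_update_add, ha, hb, add_zero]
        | smul c a _ ha => rw [F.map_update_smul, ha, smul_zero]
      have h3 := this (x j) (by rw [hW]; trivial)
      rwa [Function.update_eq_self] at h3
  exact key Finset.univ x (by simp)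

theorem WZ_cramer {L : Type*} {V : Type*} [Field L] [AddCommGroup V] [Module L V]
    [FiniteDimensional L V] (N : ℕ) (hN : Module.finrank L V ≤ N) (φ : V [⋀^Fin N]→ₗ[L] L)
    (x : Fin N → V) (A : V) : ∑ j, φ (Function.update x j A) • x j = φ x • A := by
  classical
  rcases hN.lt_or_eq with h | h
  · have : φ = 0 := by
      ext v
      apply φ.map_linearDependent
      intro hli
      have := hli.fintype_card_le_finrank
      simp at this
      omega
    simp [this]
  · let b : Module.Basis (Fin N) L V := Module.finBasisOfFinrankEq L V h
    rw [φ.eq_smul_basis_det b]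
    simp only [AlternatingMap.smul_apply, smul_eq_mul, mul_smul, ← Finset.smul_sum]
    congr 1
    apply b.repr.injective
    ext i
    have := congrFun (Matrix.mulVec_cramer (b.toMatrix x) (b.repr A)) i
    simp only [Matrix.mulVec, dotProduct, Pi.smul_apply, smul_eq_mul, Matrix.cramer_apply] at this
    rw [map_smul, Finsupp.smul_apply, Module.Basis.det_apply, smul_eq_mul, ← this, map_sum,
      Finsupp.finset_sum_apply]
    refine Finset.sum_congr rfl fun j _ => ?_
    rw [map_smul, Finsupp.smul_apply, smul_eq_mul, mul_comm, Module.Basis.det_apply,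
      Module.Basis.toMatrix_update]
    rfl

theorem WZ_split {R : Type u} [Ring R] (N : ℕ) (x U W : Fin N → R)
    (σ : Equiv.Perm (Fin N)) (i : Fin N) :
    ∃ P Q : R, ∀ {B : Type u} [Ring B] (ρ : R →+* B) (a : B),
      (List.ofFn fun j => ρ (U j) * Function.update (fun l => ρ (x l)) i a (σ j) * ρ (W j)).prod =
        ρ P * a * ρ Q := by
  obtain ⟨l1, l2, hl⟩ := List.append_of_mem (List.mem_finRange (σ.symm i))
  have hnd := List.nodup_finRange N
  rw [hl, List.nodup_append] at hnd
  obtain ⟨-, h2, h3⟩ := hnd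
  refine ⟨(l1.map fun j => U j * x (σ j) * W j).prod * U (σ.symm i),
    W (σ.symm i) * (l2.map fun j => U j * x (σ j) * W j).prod, ?_⟩
  intro B _ ρ a
  have h4 : ∀ l : List (Fin N), σ.symm i ∉ l → (l.map fun j => ρ (U j) *
      Function.update (fun l => ρ (x l)) i a (σ j) * ρ (W j)).prod =
      ρ (l.map fun j => U j * x (σ j) * W j).prod := by
    intro l hl
    rw [map_list_prod, List.map_map]
    congr 1
    apply List.map_congr_left
    intro j hj
    rw [Function.update_of_ne]
    · simp
    · intro h; apply hl; rw [← h]; simpa using hj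
  rw [List.ofFn_eq_map, hl, List.map_append, List.map_cons, List.prod_append, List.prod_cons,
    h4 l1, h4 l2]
  · simp [mul_assoc]
  · exact (List.nodup_cons.1 h2).1
  · intro h; exact h3 _ h _ (by simp) rfl

theorem WZ_capelli {R : Type u} [Ring R] (N : ℕ) (x U W : Fin N → R) :
    ∃ e : Fin N → R, ∀ (L : Type u) [Field L] (m : ℕ) (ρ : R →+* Matrix (Fin m) (Fin m) L),
      ∃ φ : (Matrix (Fin m) (Fin m) L) [⋀^Fin N]→ₗ[L] L,
        (∀ X, φ X = ∑ σ : Equiv.Perm (Fin N), Equiv.Perm.sign σ •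
          (List.ofFn fun j => ρ (U j) * X (σ j) * ρ (W j)).prod.trace) ∧
        ∀ i A, (ρ (e i) * A).trace = φ (Function.update (fun l => ρ (x l)) i A) := by
  choose P Q hPQ using WZ_split N x U W
  refine ⟨fun i => ∑ σ : Equiv.Perm (Fin N), Equiv.Perm.sign σ • (Q σ i * P σ i), ?_⟩
  intro L _ m ρ
  let M : MultilinearMap L (fun _ : Fin N => Matrix (Fin m) (Fin m) L) L :=
    (Matrix.traceLinearMap (Fin m) L L).compMultilinearMap
    ((MultilinearMap.mkPiAlgebraFin L N (Matrix (Fin m) (Fin m) L)).compLinearMap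
      (fun j => (LinearMap.mulRight L (ρ (W j))).comp (LinearMap.mulLeft L (ρ (U j)))))
  have hM : ∀ X, MultilinearMap.alternatization M X = ∑ σ : Equiv.Perm (Fin N), Equiv.Perm.sign σ •
          (List.ofFn fun j => ρ (U j) * X (σ j) * ρ (W j)).prod.trace := by
    intro X
    rw [MultilinearMap.alternatization_apply]
    refine Finset.sum_congr rfl fun σ _ => ?_
    rfl
  refine ⟨MultilinearMap.alternatization M, hM, ?_⟩
  intro i A
  rw [hM]
  rw [map_sum, Finset.sum_mul, Matrix.trace_sum]
  refine Finset.sum_congr rfl fun σ _ => ?_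
  rw [hPQ σ i ρ A]
  rcases Int.units_eq_one_or (Equiv.Perm.sign σ) with h | h
  · simp only [h, one_smul, map_mul]
    rw [mul_assoc, Matrix.trace_mul_comm]
  · simp only [h, Units.neg_smul, one_smul, map_mul, map_neg, neg_mul, Matrix.trace_neg]
    rw [mul_assoc, Matrix.trace_mul_comm]


theorem WZ_capelli_ne {R : Type u} [Ring R] (L : Type u) [Field L] (n : ℕ) (hn : 0 < n)
    (ρ : R →+* Matrix (Fin n) (Fin n) L) (hρ : Submodule.span L (Set.range ρ) = ⊤) :
    ∃ x U W : Fin (n * n) → R, ∑ σ : Equiv.Perm (Fin (n * n)), Equiv.Perm.sign σ •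
          (List.ofFn fun j => ρ (U j) * ρ (x (σ j)) * ρ (W j)).prod.trace ≠ 0 := by
  classical
  by_contra! hcon
  have h1 : ∀ (U W : Fin (n * n) → R) (X : Fin (n * n) → Matrix (Fin n) (Fin n) L),
      ∑ σ : Equiv.Perm (Fin (n * n)), Equiv.Perm.sign σ •
          (List.ofFn fun j => ρ (U j) * X (σ j) * ρ (W j)).prod.trace = 0 := by
    intro U W X
    obtain ⟨e, he⟩ := WZ_capelli (n * n) U U W
    obtain ⟨φ, hφ, -⟩ := he L n ρ
    rw [← hφ]
    refine WZ_mlin_zero (n * n) φ.toMultilinearMap (Set.range ρ) ?_ hρ X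
    intro x hx
    choose y hy using hx
    obtain rfl : (fun i => ρ (y i)) = x := funext hy
    exact (hφ _).trans (hcon y U W)
  let M1 := fun Y : Equiv.Perm (Fin (n * n)) → Fin (n * n) → Matrix (Fin n) (Fin n) L =>
    ∑ σ : Equiv.Perm (Fin (n * n)), Equiv.Perm.sign σ •
      (Matrix.traceLinearMap (Fin n) L L).compMultilinearMap
      ((MultilinearMap.mkPiAlgebraFin L (n * n) (Matrix (Fin n) (Fin n) L)).compLinearMap
      (fun j => (LinearMap.mulRight L (Y σ j))))
  have hM1 : ∀ Y U, M1 Y U = ∑ σ : Equiv.Perm (Fin (n * n)), Equiv.Perm.sign σ •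
      (List.ofFn fun j => U j * Y σ j).prod.trace := by
    intro Y U
    simp only [M1, sum_apply]
    rfl
  let M2 := fun Y : Equiv.Perm (Fin (n * n)) → Fin (n * n) → Matrix (Fin n) (Fin n) L =>
    ∑ σ : Equiv.Perm (Fin (n * n)), Equiv.Perm.sign σ •
      (Matrix.traceLinearMap (Fin n) L L).compMultilinearMap
      ((MultilinearMap.mkPiAlgebraFin L (n * n) (Matrix (Fin n) (Fin n) L)).compLinearMap
      (fun j => (LinearMap.mulLeft L (Y σ j))))
  have hM2 : ∀ Y U, M2 Y U = ∑ σ : Equiv.Perm (Fin (n * n)), Equiv.Perm.sign σ •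
      (List.ofFn fun j => Y σ j * U j).prod.trace := by
    intro Y U
    simp only [M2, sum_apply]
    rfl
  have h2 : ∀ (U : Fin (n * n) → Matrix (Fin n) (Fin n) L) (W : Fin (n * n) → R)
      (X : Fin (n * n) → Matrix (Fin n) (Fin n) L),
      ∑ σ : Equiv.Perm (Fin (n * n)), Equiv.Perm.sign σ •
          (List.ofFn fun j => U j * X (σ j) * ρ (W j)).prod.trace = 0 := by
    intro U W X
    simp_rw [mul_assoc]
    rw [← hM1 (fun σ j => X (σ j) * ρ (W j)) U]
    refine WZ_mlin_zero (n * n) _ (Set.range ρ) ?_ hρ U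
    intro x hx
    choose y hy using hx
    obtain rfl : (fun i => ρ (y i)) = x := funext hy
    rw [hM1]
    simp_rw [← mul_assoc]
    exact h1 y W X
  have h3 : ∀ (U W X : Fin (n * n) → Matrix (Fin n) (Fin n) L),
      ∑ σ : Equiv.Perm (Fin (n * n)), Equiv.Perm.sign σ •
          (List.ofFn fun j => U j * X (σ j) * W j).prod.trace = 0 := by
    intro U W X
    rw [← hM2 (fun σ j => U j * X (σ j)) W]
    refine WZ_mlin_zero (n * n) _ (Set.range ρ) ?_ hρ W
    intro x hx
    choose y hy using hx
    obtain rfl : (fun i => ρ (y i)) = x := funext hy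
    rw [hM2]
    exact h2 U y X
  let z : Fin n := ⟨0, hn⟩
  let q : Fin (n * n) ≃ Fin n × Fin n := finProdFinEquiv.symm
  have h4 := h3 (fun j => Matrix.single z (q j).1 1) (fun j => Matrix.single (q j).2 z 1)
    (fun j => Matrix.single (q j).1 (q j).2 1)
  have h5 : ∀ i j : Fin (n * n), (Matrix.single z (q j).1 (1 : L)) *
      (Matrix.single (q i).1 (q i).2 (1 : L)) * (Matrix.single (q j).2 z (1 : L)) =
      if i = j then Matrix.single z z (1 : L) else 0 := by
    intro i j
    split_ifs with h
    · subst h; simp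
    · by_cases ha : (q j).1 = (q i).1
      · have hb : (q i).2 ≠ (q j).2 := by
          intro hb; exact h (q.injective (Prod.ext ha.symm hb))
        rw [ha, Matrix.single_mul_single_same, Matrix.single_mul_single_of_ne _ _ _ _ hb]
      · rw [Matrix.single_mul_single_of_ne _ _ _ _ ha, zero_mul]
  simp_rw [h5] at h4
  rw [Finset.sum_eq_single 1] at h4
  · simp only [Equiv.Perm.sign_one, one_smul, Equiv.Perm.coe_one, id, if_true] at h4
    have h6 : ∀ m : ℕ, (Matrix.single z z (1 : L)) ^ (m + 1) = Matrix.single z z 1 := by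
      intro m
      induction m with
      | zero => simp
      | succ m ih => rw [pow_succ, ih]; simp
    rw [List.ofFn_const, List.prod_replicate] at h4
    obtain ⟨m, hm⟩ : ∃ m, n * n = m + 1 := Nat.exists_eq_succ_of_ne_zero (by positivity)
    rw [hm, h6] at h4
    simp at h4
  · intro σ _ hσ
    obtain ⟨j, hj⟩ : ∃ j, σ j ≠ j := by
      by_contra! hc; exact hσ (Equiv.ext hc)
    rw [List.prod_eq_zero]
    · simp
    · rw [List.mem_ofFn]
      exact ⟨j, if_neg hj⟩
  · simp

theorem WZ_PI_structure {k : Type u'} [Field k] {R : Type u} [Ring R] [Nontrivial R] [Algebra k R]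
    [IsNoetherianRing R]
    (hs : ∀ a : R, (∀ x : R, a * x * a = 0) → a = 0)
    (d : ℕ) (α : Equiv.Perm (Fin d) → k) (hα1 : α 1 ≠ 0)
    (hα : ∀ x : Fin d → R, ∑ σ, α σ • (List.ofFn fun i => x (σ i)).prod = 0) :
    ∃ (N : ℕ) (x e : Fin N → R) (c : R), c ≠ 0 ∧ c ∈ Set.center R ∧
      (∀ i a, (∑ j, e j * (a * e i) * x j) ∈ Set.center R) ∧
      (∀ i l, (∑ j, e j * (x l * e i) * x j) = if i = l then c else 0) ∧
      (∀ a, c * a = ∑ i, (∑ j, e j * (a * e i) * x j) * x i) := by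
  classical
  let p : ℕ → Prop := fun n => 0 < n ∧ ∃ (L : Type u) (_ : Field L)
    (ρ : R →+* Matrix (Fin n) (Fin n) L), Submodule.span L (Set.range ρ) = ⊤
  have hrep : ∀ r : R, r ≠ 0 → ∃ (L : Type u) (_ : Field L) (n : ℕ) (_ : n ≤ d)
      (ρ : R →+* Matrix (Fin n) (Fin n) L),
      0 < n ∧ ρ r ≠ 0 ∧ Submodule.span L (Set.range ρ) = ⊤ := by
    intro r hr
    obtain ⟨L, _, n, hn, ρ, h1, h2⟩ := WZ_matrix_rep hs d α hα1 hα r hr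
    refine ⟨L, inferInstance, n, hn, ρ, ?_, h1, h2⟩
    rcases Nat.eq_zero_or_pos n with rfl | h
    · exact absurd (Subsingleton.elim _ _) h1
    · exact h
  set n := Nat.findGreatest p d with hn
  have hpn : p n := by
    obtain ⟨L, _, m, hm, ρ, h0, h1, h2⟩ := hrep 1 one_ne_zero
    exact Nat.findGreatest_spec (P := p) hm ⟨h0, L, inferInstance, ρ, h2⟩
  have hext : ∀ r s : R, (∀ (L : Type u) (_ : Field L) (m : ℕ) (_ : m ≤ n)
      (ρ : R →+* Matrix (Fin m) (Fin m) L), Submodule.span L (Set.range ρ) = ⊤ → ρ r = ρ s) →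
      r = s := by
    intro r s h
    by_contra hrs
    obtain ⟨L, _, m, hm, ρ, h0, h1, h2⟩ := hrep (r - s) (sub_ne_zero.2 hrs)
    apply h1
    rw [map_sub, h L inferInstance m
      (Nat.le_findGreatest hm ⟨h0, L, inferInstance, ρ, h2⟩) ρ h2, sub_self]
  obtain ⟨hn0, L₀, _, ρ₀, hρ₀⟩ := hpn
  obtain ⟨x, U, W, hne⟩ := WZ_capelli_ne L₀ n hn0 ρ₀ hρ₀
  obtain ⟨e, he⟩ := WZ_capelli (n * n) x U W
  have key : ∀ (L : Type u) [Field L] (m : ℕ) (_ : m ≤ n)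
      (ρ : R →+* Matrix (Fin m) (Fin m) L), ∃ lam : L,
      (lam = ∑ σ : Equiv.Perm (Fin (n * n)), Equiv.Perm.sign σ •
          (List.ofFn fun j => ρ (U j) * ρ (x (σ j)) * ρ (W j)).prod.trace) ∧
      (∀ i j, (ρ (x j) * ρ (e i)).trace = if i = j then lam else 0) ∧
      (∀ A, ∑ j, (A * ρ (e j)).trace • ρ (x j) = lam • A) ∧
      (∀ A, ∑ j, ρ (e j) * A * ρ (x j) = (lam * A.trace) • 1) := by
    intro L _ m hm ρ
    obtain ⟨φ, h1, h2⟩ := he L m ρ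
    have h3 : ∀ A, ∑ j, (A * ρ (e j)).trace • ρ (x j) = φ (fun l => ρ (x l)) • A := by
      intro A
      rw [← WZ_cramer (n * n) _ φ (fun l => ρ (x l)) A]
      · refine Finset.sum_congr rfl fun j _ => ?_
        rw [← h2, Matrix.trace_mul_comm]
      · rw [Module.finrank_matrix]; simp; gcongr
    refine ⟨φ (fun l => ρ (x l)), h1 _, ?_, h3, ?_⟩
    · intro i j
      rw [Matrix.trace_mul_comm, h2]
      split_ifs with h
      · subst h; rw [Function.update_eq_self]
      · apply φ.map_eq_zero_of_eq (i := i) (j := j) _ _ h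
        rw [Function.update_self, Function.update_of_ne (Ne.symm h)]
    · intro A
      have h4 : ∀ a b s t, ∑ j, ρ (e j) a b * ρ (x j) s t =
          φ (fun l => ρ (x l)) * (if b = s ∧ a = t then 1 else 0) := by
        intro a b s t
        have := congrFun (congrFun (h3 (Matrix.single b a 1)) s) t
        simp only [Matrix.sum_apply, Matrix.smul_apply, smul_eq_mul] at this
        rw [Matrix.single_apply] at this
        rw [← this]
        refine Finset.sum_congr rfl fun j _ => ?_
        rw [Matrix.trace_single_mul, one_smul]
      ext a t
      simp only [Matrix.sum_apply, Matrix.mul_apply, Matrix.smul_apply, Matrix.one_apply,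
        smul_eq_mul, Finset.sum_mul]
      rw [Finset.sum_comm]
      simp_rw [Finset.sum_comm (s := (Finset.univ : Finset (Fin (n * n))))]
      have h5 : ∀ s b, ∑ j, ρ (e j) a b * A b s * ρ (x j) s t =
        A b s * (φ (fun l => ρ (x l)) * (if b = s ∧ a = t then 1 else 0)) := by
        intro s b
        rw [← h4, Finset.mul_sum]
        refine Finset.sum_congr rfl fun j _ => by ring
      simp_rw [h5]
      by_cases hat : a = t
      · simp [hat, Matrix.trace, Finset.sum_mul, mul_comm]
      · simp [hat]
  have hζ : ∀ (L : Type u) [Field L] (m : ℕ) (_ : m ≤ n)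
      (ρ : R →+* Matrix (Fin m) (Fin m) L), ∃ lam : L,
      (lam = ∑ σ : Equiv.Perm (Fin (n * n)), Equiv.Perm.sign σ •
          (List.ofFn fun j => ρ (U j) * ρ (x (σ j)) * ρ (W j)).prod.trace) ∧
      (∀ i j, (ρ (x j) * ρ (e i)).trace = if i = j then lam else 0) ∧
      (∀ A, ∑ j, (A * ρ (e j)).trace • ρ (x j) = lam • A) ∧
      ∀ i a, ρ (∑ j, e j * (a * e i) * x j) = (lam * (ρ a * ρ (e i)).trace) • 1 := by
    intro L _ m hm ρ
    obtain ⟨lam, h0, h1, h2, h3⟩ := key L m hm ρ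
    refine ⟨lam, h0, h1, h2, ?_⟩
    intro i a
    rw [map_sum, ← h3]
    simp
  let i0 : Fin (n * n) := ⟨0, by positivity⟩
  refine ⟨n * n, x, e, ∑ j, e j * (x i0 * e i0) * x j, ?_, ?_⟩
  · intro h0
    obtain ⟨lam, h1, h2, h3, h4⟩ := hζ L₀ n le_rfl ρ₀
    have h5 := h4 i0 (x i0)
    rw [h0, map_zero, h2, if_pos rfl] at h5
    have h6 := congrFun (congrFun h5 ⟨0, hn0⟩) ⟨0, hn0⟩
    rw [← h1] at hne
    simp [hne] at h6
  have hcen : ∀ i a, (∑ j, e j * (a * e i) * x j) ∈ Set.center R := by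
    intro i a
    rw [Semigroup.mem_center_iff]
    intro g
    apply hext
    intro L _ m hm ρ hρ
    obtain ⟨lam, h1, h2, h3, h4⟩ := hζ L m hm ρ
    rw [map_mul, map_mul, h4]
    simp
  refine ⟨hcen _ _, hcen, ?_, ?_⟩
  · intro i l
    apply hext
    intro L _ m hm ρ hρ
    obtain ⟨lam, h1, h2, h3, h4⟩ := hζ L m hm ρ
    rw [h4, h2]
    split_ifs
    · rw [h4, h2, if_pos rfl]
    · simp
  · intro a
    apply hext
    intro L _ m hm ρ hρ
    obtain ⟨lam, h1, h2, h3, h4⟩ := hζ L m hm ρ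
    rw [map_mul, h4, h2, if_pos rfl, map_sum]
    simp_rw [map_mul, h4]
    simp_rw [smul_mul_assoc, one_mul, mul_smul, ← Finset.smul_sum, h3]


open CategoryTheory in
/-- Elementary wrapper: projective dimension less than `n`. -/
def WZ_PD (R : Type u) [Ring R] (n : ℕ) (M : Type u) [AddCommGroup M] [Module R M] : Prop :=
  HasProjectiveDimensionLT (ModuleCat.of R M) n

section
variable {R : Type u} [Ring R] {A B C : Type u} [AddCommGroup A] [Module R A] [AddCommGroup B]
  [Module R B] [AddCommGroup C] [Module R C]

open CategoryTheory

theorem WZ_PD_one_iff : WZ_PD R 1 A ↔ Module.Projective R A := by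
  rw [WZ_PD, ← projective_iff_hasProjectiveDimensionLT_one, IsProjective.iff_projective]

theorem WZ_PD_mono {n m : ℕ} (h : WZ_PD R n A) (hnm : n ≤ m) : WZ_PD R m A := by
  haveI : HasProjectiveDimensionLT (ModuleCat.of R A) n := h
  exact hasProjectiveDimensionLT_of_ge _ n m hnm

theorem WZ_PD_retract {n : ℕ} (h : WZ_PD R n B) (i : A →ₗ[R] B) (p : B →ₗ[R] A)
    (hip : ∀ a, p (i a) = a) : WZ_PD R n A := by
  haveI : HasProjectiveDimensionLT (ModuleCat.of R B) n := h
  have r : Retract (ModuleCat.of R A) (ModuleCat.of R B) :=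
    { i := ModuleCat.ofHom i
      r := ModuleCat.ofHom p
      retract := by ext a; exact hip a }
  exact r.hasProjectiveDimensionLT n

theorem WZ_PD_equiv {n : ℕ} (h : WZ_PD R n B) (e : A ≃ₗ[R] B) : WZ_PD R n A :=
  WZ_PD_retract h e.toLinearMap e.symm.toLinearMap (by simp)

theorem WZ_shortExact (f : A →ₗ[R] B) (g : B →ₗ[R] C) (hf : Function.Injective f)
    (hg : Function.Surjective g) (hfg : Function.Exact f g) :
    ∃ S : ShortComplex (ModuleCat.{u} R), S.ShortExact ∧ S.X₁ = ModuleCat.of R A ∧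
      S.X₂ = ModuleCat.of R B ∧ S.X₃ = ModuleCat.of R C := by
  refine ⟨ShortComplex.mk (ModuleCat.ofHom f) (ModuleCat.ofHom g) ?_, ?_, rfl, rfl, rfl⟩
  · ext a; exact hfg.apply_apply_eq_zero a
  · haveI : Mono (ModuleCat.ofHom f) := (ModuleCat.mono_iff_injective _).2 hf
    haveI : Epi (ModuleCat.ofHom g) := (ModuleCat.epi_iff_surjective _).2 hg
    refine ShortComplex.ShortExact.mk ?_
    rw [ShortComplex.ShortExact.moduleCat_exact_iff_function_exact]
    exact hfg

theorem WZ_PD_coker {n : ℕ} (f : A →ₗ[R] B) (g : B →ₗ[R] C) (hf : Function.Injective f)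
    (hg : Function.Surjective g) (hfg : Function.Exact f g)
    (hA : WZ_PD R n A) (hB : WZ_PD R (n + 1) B) : WZ_PD R (n + 1) C := by
  obtain ⟨S, hS, h1, h2, h3⟩ := WZ_shortExact f g hf hg hfg
  rw [WZ_PD, ← h3]
  rw [WZ_PD, ← h1] at hA
  rw [WZ_PD, ← h2] at hB
  exact hS.hasProjectiveDimensionLT_X₃ n hA hB

theorem WZ_PD_ker {n : ℕ} (f : A →ₗ[R] B) (g : B →ₗ[R] C) (hf : Function.Injective f)
    (hg : Function.Surjective g) (hfg : Function.Exact f g)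
    (hB : WZ_PD R n B) (hC : WZ_PD R (n + 1) C) : WZ_PD R n A := by
  obtain ⟨S, hS, h1, h2, h3⟩ := WZ_shortExact f g hf hg hfg
  rw [WZ_PD, ← h1]
  rw [WZ_PD, ← h3] at hC
  rw [WZ_PD, ← h2] at hB
  exact hS.hasProjectiveDimensionLT_X₁ n hB hC
end


open TensorProduct

section
variable {k : Type u'} [Field k] {H : Type u} [Ring H] [HopfAlgebra k H]

/-- The module attached to a representation. -/
def WZ_Mod {M : Type u} [AddCommGroup M] [Module k M] (_ρ : H →ₐ[k] Module.End k M) : Type u := M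

variable {M W : Type u} [AddCommGroup M] [Module k M] [AddCommGroup W] [Module k W]

noncomputable instance WZ_ModA (ρ : H →ₐ[k] Module.End k M) : AddCommGroup (WZ_Mod ρ) :=
  inferInstanceAs (AddCommGroup M)

noncomputable instance WZ_ModK (ρ : H →ₐ[k] Module.End k M) : Module k (WZ_Mod ρ) :=
  inferInstanceAs (Module k M)

noncomputable instance WZ_ModH (ρ : H →ₐ[k] Module.End k M) : Module H (WZ_Mod ρ) :=
  Module.compHom M ρ.toRingHom

theorem WZ_Mod_smul (ρ : H →ₐ[k] Module.End k M) (h : H) (m : WZ_Mod ρ) :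
    h • m = (ρ h (m : M) : M) := rfl

/-- H-linear maps from k-linear maps commuting with the representations. -/
def WZ_Mod_hom {X : Type u} [AddCommGroup X] [Module H X] [Module k X] [IsScalarTower k H X]
    (ρ : H →ₐ[k] Module.End k M) (f : X →ₗ[k] M) (hf : ∀ h x, f (h • x) = ρ h (f x)) :
    X →ₗ[H] WZ_Mod ρ where
  toFun := f
  map_add' := f.map_add
  map_smul' := hf

/-- H-linear maps between representations. -/
def WZ_Mod_map (ρ : H →ₐ[k] Module.End k M) (τ : H →ₐ[k] Module.End k W) (f : M →ₗ[k] W)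
    (hf : ∀ h x, f (ρ h x) = τ h (f x)) :
    WZ_Mod ρ →ₗ[H] WZ_Mod τ where
  toFun := f
  map_add' := f.map_add
  map_smul' := hf

/-- action of `H ⊗ H` on `M ⊗ W`. -/
noncomputable def WZ_act (ρ : H →ₐ[k] Module.End k M) (τ : H →ₐ[k] Module.End k W) :
    H ⊗[k] H →ₐ[k] Module.End k (M ⊗[k] W) :=
  (Module.endTensorEndAlgHom (R := k) (S := k) (A := k)).comp (Algebra.TensorProduct.map ρ τ)

theorem WZ_act_tmul (ρ : H →ₐ[k] Module.End k M) (τ : H →ₐ[k] Module.End k W) (a b : H)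
    (m : M) (w : W) : WZ_act ρ τ (a ⊗ₜ b) (m ⊗ₜ w) = ρ a m ⊗ₜ τ b w := by
  simp [WZ_act, Module.endTensorEndAlgHom_apply]

/-- the tensor product representation -/
noncomputable def WZ_tens (ρ : H →ₐ[k] Module.End k M) (τ : H →ₐ[k] Module.End k W) :
    H →ₐ[k] Module.End k (M ⊗[k] W) :=
  (WZ_act ρ τ).comp (Bialgebra.comulAlgHom k H)

theorem WZ_tens_apply (ρ : H →ₐ[k] Module.End k M) (τ : H →ₐ[k] Module.End k W) (h : H) :
    WZ_tens ρ τ h = WZ_act ρ τ (CoalgebraStruct.comul (R := k) h) := rfl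

theorem WZ_act_map {M' W' : Type u} [AddCommGroup M'] [Module k M'] [AddCommGroup W'] [Module k W']
    (ρ : H →ₐ[k] Module.End k M) (τ : H →ₐ[k] Module.End k W)
    (ρ' : H →ₐ[k] Module.End k M') (τ' : H →ₐ[k] Module.End k W')
    (f : M →ₗ[k] M') (g : W →ₗ[k] W')
    (hf : ∀ h x, f (ρ h x) = ρ' h (f x)) (hg : ∀ h x, g (τ h x) = τ' h (g x))
    (t : H ⊗[k] H) (s : M ⊗[k] W) :
    TensorProduct.map f g (WZ_act ρ τ t s) = WZ_act ρ' τ' t (TensorProduct.map f g s) := by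
  induction t with
  | zero => simp
  | add a b ha hb => simp only [map_add, LinearMap.add_apply, ha, hb]
  | tmul a b =>
    induction s with
    | zero => simp
    | add s t hs ht => simp only [map_add, hs, ht]
    | tmul m w => simp only [WZ_act_tmul, TensorProduct.map_tmul, hf, hg]

/-- `h ⊗ w ↦ h₁ ⊗ σ(h₂) w` -/
noncomputable def WZ_theta (σ : H →ₗ[k] Module.End k W) : H ⊗[k] W →ₗ[k] H ⊗[k] W :=
  (LinearMap.lTensor H (TensorProduct.lift σ)).comp
    ((TensorProduct.assoc k H H W).toLinearMap.comp
      (LinearMap.rTensor W (CoalgebraStruct.comul (R := k) (A := H))))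

theorem WZ_theta_tmul (σ : H →ₗ[k] Module.End k W) (h : H) (w : W) :
    WZ_theta σ (h ⊗ₜ w) = LinearMap.lTensor H (LinearMap.flip σ w) (CoalgebraStruct.comul (R := k) h) := by
  simp only [WZ_theta, LinearMap.comp_apply, LinearMap.rTensor_tmul]
  induction (CoalgebraStruct.comul (R := k) h) with
  | zero => simp
  | add a b ha hb => simp only [TensorProduct.add_tmul, map_add, ha, hb]
  | tmul a b => simp

theorem WZ_theta_comp (σ σ' : H →ₗ[k] Module.End k W)
    (hσ : ∀ h : H, LinearMap.mul' k (Module.End k W) (TensorProduct.map σ σ' (CoalgebraStruct.comul (R := k) h)) =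
      CoalgebraStruct.counit (R := k) h • 1) (t : H ⊗[k] W) :
    WZ_theta σ (WZ_theta σ' t) = t := by
  induction t with
  | zero => simp
  | add a b ha hb => rw [map_add, map_add, ha, hb]
  | tmul h w =>
    let G : H ⊗[k] (H ⊗[k] H) →ₗ[k] H ⊗[k] W := LinearMap.lTensor H
      ((LinearMap.applyₗ w).comp ((LinearMap.mul' k (Module.End k W)).comp (TensorProduct.map σ σ')))
    have h1 : ∀ t : H ⊗[k] H, WZ_theta σ (LinearMap.lTensor H (LinearMap.flip σ' w) t) =
        G (TensorProduct.assoc k H H H (LinearMap.rTensor H (CoalgebraStruct.comul (R := k)) t)) := by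
      intro t
      induction t with
      | zero => simp
      | add a b ha hb => simp only [map_add, ha, hb]
      | tmul a c =>
        rw [LinearMap.lTensor_tmul, WZ_theta_tmul, LinearMap.rTensor_tmul]
        induction (CoalgebraStruct.comul (R := k) a) with
        | zero => simp
        | add a b ha hb => simp only [TensorProduct.add_tmul, map_add, ha, hb]
        | tmul a b => simp [G]
    have h2 : ∀ t : H ⊗[k] H, G (LinearMap.lTensor H (CoalgebraStruct.comul (R := k)) t) =
        LinearMap.lTensor H (LinearMap.toSpanSingleton k W w)
          (LinearMap.lTensor H (CoalgebraStruct.counit (R := k)) t) := by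
      intro t
      induction t with
      | zero => simp
      | add a b ha hb => simp only [map_add, ha, hb]
      | tmul a c => simp [G, hσ]
    rw [WZ_theta_tmul σ', h1, Coalgebra.coassoc_apply, h2, Coalgebra.lTensor_counit_comul]
    simp

theorem WZ_theta_act (τ : H →ₐ[k] Module.End k W) (g : H) (s : H ⊗[k] W) :
    WZ_theta τ.toLinearMap (g • s) =
      WZ_tens (Algebra.lsmul k k H) τ g (WZ_theta τ.toLinearMap s) := by
  have key : ∀ (t : H ⊗[k] H) (w : W), LinearMap.lTensor H (LinearMap.flip τ.toLinearMap w) t =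
      WZ_act (Algebra.lsmul k k H) τ t (1 ⊗ₜ w) := by
    intro t w
    induction t with
    | zero => simp
    | add a b ha hb => simp only [map_add, LinearMap.add_apply, ha, hb]
    | tmul a b => simp [WZ_act_tmul]
  induction s with
  | zero => simp
  | add a b ha hb => simp only [smul_add, map_add, ha, hb]
  | tmul h w =>
    rw [TensorProduct.smul_tmul', smul_eq_mul, WZ_theta_tmul, WZ_theta_tmul, key, key,
      WZ_tens_apply, Bialgebra.comul_mul, map_mul]
    rfl

theorem WZ_theta_bij (τ : H →ₐ[k] Module.End k W) : Function.Bijective (WZ_theta τ.toLinearMap) := by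
  have h1 : ∀ t, WZ_theta τ.toLinearMap
      (WZ_theta (τ.toLinearMap.comp (HopfAlgebra.antipode k (A := H))) t) = t := by
    intro t
    apply WZ_theta_comp
    intro h
    have h2 : ∀ t : H ⊗[k] H, LinearMap.mul' k (Module.End k W) (TensorProduct.map τ.toLinearMap
      (τ.toLinearMap.comp (HopfAlgebra.antipode k (A := H))) t) =
      τ (LinearMap.mul' k H (LinearMap.lTensor H (HopfAlgebra.antipode k (A := H)) t)) := by
      intro t
      induction t with
      | zero => simp
      | add a b ha hb => simp only [map_add, ha, hb]
      | tmul a b => simp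
    rw [h2, HopfAlgebra.mul_antipode_lTensor_comul_apply, AlgHom.commutes,
      Algebra.algebraMap_eq_smul_one]
  have h1' : ∀ t, WZ_theta (τ.toLinearMap.comp (HopfAlgebra.antipode k (A := H)))
      (WZ_theta τ.toLinearMap t) = t := by
    intro t
    apply WZ_theta_comp
    intro h
    have h2 : ∀ t : H ⊗[k] H, LinearMap.mul' k (Module.End k W) (TensorProduct.map
      (τ.toLinearMap.comp (HopfAlgebra.antipode k (A := H))) τ.toLinearMap t) =
      τ (LinearMap.mul' k H (LinearMap.rTensor H (HopfAlgebra.antipode k (A := H)) t)) := by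
      intro t
      induction t with
      | zero => simp
      | add a b ha hb => simp only [map_add, ha, hb]
      | tmul a b => simp
    rw [h2, HopfAlgebra.mul_antipode_rTensor_comul_apply, AlgHom.commutes,
      Algebra.algebraMap_eq_smul_one]
  exact Function.bijective_iff_has_inverse.2 ⟨_, h1', h1⟩

theorem WZ_free_proj (U : Type u) [AddCommGroup U] [Module k U] : Module.Projective H (H ⊗[k] U) := by
  let b := Module.Free.chooseBasis k U
  let e := (TensorProduct.AlgebraTensorModule.congr (LinearEquiv.refl H H) b.repr).trans
    (TensorProduct.finsuppScalarRight k H H (Module.Free.ChooseBasisIndex k U))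
  exact Module.Projective.of_equiv e.symm

theorem WZ_tens_free (τ : H →ₐ[k] Module.End k W) (U : Type u) [AddCommGroup U] [Module k U] :
    Module.Projective H (WZ_Mod (WZ_tens (Algebra.lsmul k k (H ⊗[k] U)) τ)) := by
  let θ := LinearEquiv.ofBijective _ (WZ_theta_bij τ)
  let e : H ⊗[k] (W ⊗[k] U) ≃ₗ[k] (H ⊗[k] U) ⊗[k] W :=
    (TensorProduct.assoc k H W U).symm.trans
      ((TensorProduct.congr θ (LinearEquiv.refl k U)).trans (TensorProduct.rightComm k H W U))
  have h1 : ∀ (t : H ⊗[k] H) (s : H ⊗[k] W) (u : U), TensorProduct.rightComm k H W U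
      (WZ_act (Algebra.lsmul k k H) τ t s ⊗ₜ u) = WZ_act (Algebra.lsmul k k (H ⊗[k] U)) τ t
        (TensorProduct.rightComm k H W U (s ⊗ₜ u)) := by
    intro t s u
    induction t with
    | zero => simp
    | add a b ha hb => simp only [map_add, LinearMap.add_apply, TensorProduct.add_tmul, ha, hb]
    | tmul a b =>
      induction s with
      | zero => simp
      | add s t hs ht => simp only [map_add, TensorProduct.add_tmul, hs, ht]
      | tmul m w => simp [WZ_act_tmul, TensorProduct.smul_tmul']
  have h2 : ∀ (g : H) x, e (g • x) = WZ_tens (Algebra.lsmul k k (H ⊗[k] U)) τ g (e x) := by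
    intro g x
    induction x with
    | zero => simp
    | add a b ha hb => simp only [smul_add, map_add, ha, hb]
    | tmul h y =>
      induction y with
      | zero => simp
      | add a b ha hb => simp only [TensorProduct.tmul_add, smul_add, map_add, ha, hb]
      | tmul w u =>
        rw [TensorProduct.smul_tmul']
        simp only [e, LinearEquiv.trans_apply, TensorProduct.assoc_symm_tmul,
          TensorProduct.congr_tmul, LinearEquiv.refl_apply, θ, LinearEquiv.ofBijective_apply]
        rw [← TensorProduct.smul_tmul', WZ_theta_act, WZ_tens_apply, h1]
        rfl
  haveI := WZ_free_proj (k := k) (H := H) (W ⊗[k] U)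
  let E := WZ_Mod_hom (X := H ⊗[k] (W ⊗[k] U)) (WZ_tens (Algebra.lsmul k k (H ⊗[k] U)) τ)
    e.toLinearMap h2
  have hE : Function.Bijective E := e.bijective
  exact Module.Projective.of_equiv (LinearEquiv.ofBijective E hE)
end


open TensorProduct

section
variable {k : Type u'} [Field k] {H : Type u} [Ring H] [HopfAlgebra k H]

/-- tensoring a map with a fixed representation -/
noncomputable def WZ_Tmap {X Y W : Type u} [AddCommGroup X] [Module k X] [Module H X]
    [IsScalarTower k H X] [AddCommGroup Y] [Module k Y] [Module H Y] [IsScalarTower k H Y]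
    [AddCommGroup W] [Module k W] (τ : H →ₐ[k] Module.End k W) (f : X →ₗ[H] Y) :
    WZ_Mod (WZ_tens (Algebra.lsmul k k X) τ) →ₗ[H] WZ_Mod (WZ_tens (Algebra.lsmul k k Y) τ) :=
  WZ_Mod_map _ _ (LinearMap.rTensor W (f.restrictScalars k)) (by
    intro h x
    rw [WZ_tens_apply, WZ_tens_apply]
    exact WZ_act_map _ _ _ _ _ _ (by intro h x; simp) (by intro h x; simp) _ _)

/-- the action map -/
noncomputable def WZ_pi (X : Type u) [AddCommGroup X] [Module k X] [Module H X]
    [IsScalarTower k H X] : H ⊗[k] X →ₗ[H] X where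
  toFun := TensorProduct.lift (Algebra.lsmul k k X (A := H)).toLinearMap
  map_add' := by simp
  map_smul' := by
    intro h t
    induction t with
    | zero => simp
    | add a b ha hb => simp only [smul_add, map_add, ha, hb]
    | tmul a b => simp [TensorProduct.smul_tmul']

theorem WZ_pi_tmul {X : Type u} [AddCommGroup X] [Module k X] [Module H X]
    [IsScalarTower k H X] (h : H) (x : X) : WZ_pi (k := k) X (h ⊗ₜ x) = h • x := by
  simp [WZ_pi]

theorem WZ_PD_tens (W : Type u) [AddCommGroup W] [Module k W] (τ : H →ₐ[k] Module.End k W) (n : ℕ) :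
    ∀ (X : Type u) [AddCommGroup X] [Module k X] [Module H X] [IsScalarTower k H X],
      WZ_PD H (n + 1) X → WZ_PD H (n + 1) (WZ_Mod (WZ_tens (Algebra.lsmul k k X) τ)) := by
  induction n with
  | zero =>
    intro X _ _ _ _ hX
    have hs : Function.Surjective (WZ_pi (k := k) (H := H) X) := fun x =>
      ⟨1 ⊗ₜ x, by rw [WZ_pi_tmul, one_smul]⟩
    have := WZ_PD_one_iff.1 hX
    obtain ⟨s, hs'⟩ := Module.projective_lifting_property (WZ_pi (k := k) (H := H) X) LinearMap.id hs
    refine WZ_PD_retract (WZ_PD_one_iff.2 (WZ_tens_free τ X)) (WZ_Tmap τ s) (WZ_Tmap τ (WZ_pi X)) ?_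
    have this : (WZ_pi (k := k) (H := H) X).restrictScalars k ∘ₗ s.restrictScalars k =
        LinearMap.id := by
      ext x; exact LinearMap.congr_fun hs' x
    have h3 : ∀ a : X ⊗[k] W, LinearMap.rTensor W ((WZ_pi (k := k) (H := H) X).restrictScalars k)
        (LinearMap.rTensor W (s.restrictScalars k) a) = a := by
      intro a
      rw [← LinearMap.comp_apply, ← LinearMap.rTensor_comp, this, LinearMap.rTensor_id]
      rfl
    exact h3
  | succ n ih =>
    intro X _ _ _ _ hX
    let π := WZ_pi (k := k) (H := H) X
    have hs : Function.Surjective π := fun x =>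
      ⟨1 ⊗ₜ x, by rw [WZ_pi_tmul, one_smul]⟩
    have hfree : WZ_PD H 1 (H ⊗[k] X) := WZ_PD_one_iff.2 (WZ_free_proj X)
    have hex : Function.Exact (LinearMap.ker π).subtype π := by
      rw [LinearMap.exact_iff]; simp
    have hK : WZ_PD H (n + 1) (LinearMap.ker π) :=
      WZ_PD_ker (LinearMap.ker π).subtype π (Submodule.subtype_injective _) hs
        hex (WZ_PD_mono hfree (by omega)) hX
    have hTF : WZ_PD H 1 (WZ_Mod (WZ_tens (Algebra.lsmul k k (H ⊗[k] X)) τ)) :=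
      WZ_PD_one_iff.2 (WZ_tens_free τ X)
    refine WZ_PD_coker (WZ_Tmap τ (LinearMap.ker π).subtype) (WZ_Tmap τ π) ?_ ?_ ?_
      (ih _ hK) (WZ_PD_mono hTF (by omega))
    · exact Module.Flat.rTensor_preserves_injective_linearMap
        ((LinearMap.ker π).subtype.restrictScalars k) (Submodule.subtype_injective _)
    · exact LinearMap.rTensor_surjective W (g := π.restrictScalars k) hs
    · have hex' : Function.Exact ((LinearMap.ker π).subtype.restrictScalars k)
        (π.restrictScalars k) := hex
      have hs2 : Function.Surjective (π.restrictScalars k) := hs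
      have h4 := rTensor_exact (M := LinearMap.ker π) (N := H ⊗[k] X) (P := X) W (f := (LinearMap.ker π).subtype.restrictScalars k) (g := π.restrictScalars k) hex' hs2
      exact h4
end


open TensorProduct

section
variable {k : Type u'} [Field k] {H : Type u} [Ring H] [HopfAlgebra k H]
  {V X : Type u} [AddCommGroup V] [Module k V] [Module H V] [IsScalarTower k H V]
  [AddCommGroup X] [Module k X] [Module H X] [IsScalarTower k H X]

/-- H-linear maps from k-linear maps commuting with the representations. -/
def WZ_Mod_hom2 {M : Type u} [AddCommGroup M] [Module k M]
    (ρ : H →ₐ[k] Module.End k M) (f : M →ₗ[k] X) (hf : ∀ h x, f (ρ h x) = h • f x) :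
    WZ_Mod ρ →ₗ[H] X where
  toFun := f
  map_add' := f.map_add
  map_smul' := hf

/-- precomposition with the antipode action -/
noncomputable def WZ_pre : H →ₐ[k] Module.End k (V →ₗ[k] X) :=
  AlgHom.ofLinearMap
    ((LinearMap.llcomp k V V X).flip.comp
      ((Algebra.lsmul k k V (A := H)).toLinearMap.comp (HopfAlgebra.antipode k (A := H))))
    (by ext φ v; simp)
    (by intro a b; ext φ v; simp [HopfAlgebra.antipode_mul_antidistrib, mul_smul])

theorem WZ_pre_apply (a : H) (φ : V →ₗ[k] X) (v : V) :
    WZ_pre (k := k) a φ v = φ (HopfAlgebra.antipode k a • v) := rfl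

/-- postcomposition with the action -/
noncomputable def WZ_post : H →ₐ[k] Module.End k (V →ₗ[k] X) :=
  AlgHom.ofLinearMap
    ((LinearMap.llcomp k V X X).comp (Algebra.lsmul k k X (A := H)).toLinearMap)
    (by ext φ v; simp)
    (by intro a b; ext φ v; simp [mul_smul])

theorem WZ_post_apply (a : H) (φ : V →ₗ[k] X) (v : V) :
    WZ_post (k := k) a φ v = a • φ v := rfl

/-- action of `H ⊗ H` on `Hom(V,X)`. -/
noncomputable def WZ_hom2 (V X : Type u) [AddCommGroup V] [Module k V] [Module H V] [IsScalarTower k H V]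
  [AddCommGroup X] [Module k X] [Module H X] [IsScalarTower k H X] :
    H ⊗[k] H →ₐ[k] Module.End k (V →ₗ[k] X) :=
  Algebra.TensorProduct.lift WZ_pre WZ_post (by
    intro a b
    apply LinearMap.ext; intro φ; apply LinearMap.ext; intro v
    simp [WZ_pre_apply, WZ_post_apply])

theorem WZ_hom2_apply (a b : H) (φ : V →ₗ[k] X) (v : V) :
    WZ_hom2 (k := k) V X (a ⊗ₜ b) φ v = b • φ (HopfAlgebra.antipode k a • v) := by
  have h1 : WZ_hom2 (k := k) V X (a ⊗ₜ b) = WZ_pre a * WZ_post b :=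
    Algebra.TensorProduct.lift_tmul _ _ _ _ _
  rw [h1]
  rfl

/-- the Hom representation -/
noncomputable def WZ_homrep (V X : Type u) [AddCommGroup V] [Module k V] [Module H V] [IsScalarTower k H V]
  [AddCommGroup X] [Module k X] [Module H X] [IsScalarTower k H X] :
    H →ₐ[k] Module.End k (V →ₗ[k] X) :=
  (WZ_hom2 V X).comp (Bialgebra.comulAlgHom k H)

/-- triple action -/
noncomputable def WZ_tri (V X : Type u) [AddCommGroup V] [Module k V] [Module H V] [IsScalarTower k H V]
  [AddCommGroup X] [Module k X] [Module H X] [IsScalarTower k H X] :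
    H ⊗[k] (H ⊗[k] H) →ₗ[k] Module.End k (V ⊗[k] (V →ₗ[k] X)) :=
  ((Module.endTensorEndAlgHom (R := k) (S := k) (A := k)).comp
    (Algebra.TensorProduct.map (Algebra.lsmul k k V (A := H)) (WZ_hom2 (k := k) V X))).toLinearMap

theorem WZ_tri_tmul (a : H) (t : H ⊗[k] H) (v : V) (φ : V →ₗ[k] X) :
    WZ_tri V X (a ⊗ₜ t) (v ⊗ₜ φ) = (a • v) ⊗ₜ (WZ_hom2 V X t φ) := by
  simp [WZ_tri, Module.endTensorEndAlgHom_apply]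

theorem WZ_tens_tri (h : H) : WZ_tens (Algebra.lsmul k k V) (WZ_homrep (k := k) V X) h =
    WZ_tri V X (TensorProduct.assoc k H H H (LinearMap.rTensor H (CoalgebraStruct.comul (R := k))
      (CoalgebraStruct.comul (R := k) h))) := by
  rw [Coalgebra.coassoc_apply, WZ_tens_apply]
  generalize CoalgebraStruct.comul (R := k) h = t
  induction t with
  | zero => simp
  | add a b ha hb => simp only [map_add, ha, hb]
  | tmul a b =>
    apply TensorProduct.ext'
    intro v φ
    rw [WZ_act_tmul, LinearMap.lTensor_tmul, WZ_tri_tmul]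
    rfl

/-- evaluation -/
noncomputable def WZ_ev (k : Type u') [Field k] (V X : Type u) [AddCommGroup V] [Module k V]
  [AddCommGroup X] [Module k X] : V ⊗[k] (V →ₗ[k] X) →ₗ[k] X :=
  TensorProduct.lift LinearMap.id.flip

theorem WZ_S21 (hinv : ∀ h : H, HopfAlgebra.antipode (R := k) (HopfAlgebra.antipode (R := k) h) = h)
    (h : H) : LinearMap.mul' k H (TensorProduct.comm k H H
      (LinearMap.lTensor H (HopfAlgebra.antipode k) (CoalgebraStruct.comul (R := k) h))) =
      algebraMap k H (CoalgebraStruct.counit (R := k) h) := by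
  have h1 : ∀ t : H ⊗[k] H, LinearMap.mul' k H (TensorProduct.comm k H H
      (LinearMap.lTensor H (HopfAlgebra.antipode k) t)) = HopfAlgebra.antipode k
        (LinearMap.mul' k H (LinearMap.rTensor H (HopfAlgebra.antipode k) t)) := by
    intro t
    induction t with
    | zero => simp
    | add a b ha hb => simp only [map_add, ha, hb]
    | tmul a b => simp [HopfAlgebra.antipode_mul_antidistrib, hinv]
  rw [h1, HopfAlgebra.mul_antipode_rTensor_comul_apply]
  simp [Algebra.algebraMap_eq_smul_one]

theorem WZ_ev_lin (hinv : ∀ h : H, HopfAlgebra.antipode (R := k) (HopfAlgebra.antipode (R := k) h) = h)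
    (h : H) (s : V ⊗[k] (V →ₗ[k] X)) :
    WZ_ev k V X (WZ_tens (Algebra.lsmul k k V) (WZ_homrep (k := k) V X) h s) = h • WZ_ev k V X s := by
  induction s with
  | zero => simp
  | add a b ha hb => simp only [smul_add, map_add, ha, hb]
  | tmul v φ =>
    rw [WZ_tens_tri]
    have h1 : ∀ t : H ⊗[k] H, WZ_ev k V X (WZ_tri V X (TensorProduct.assoc k H H H
        (LinearMap.rTensor H (CoalgebraStruct.comul (R := k)) t)) (v ⊗ₜ φ)) =
        WZ_pi X (TensorProduct.comm k X H (LinearMap.rTensor H (LinearMap.toSpanSingleton k X (φ v))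
          (LinearMap.rTensor H (CoalgebraStruct.counit (R := k)) t))) := by
      intro t
      induction t with
      | zero => simp
      | add a b ha hb => simp only [map_add, LinearMap.add_apply, ha, hb]
      | tmul a c =>
        have h2 : ∀ t : H ⊗[k] H, WZ_ev k V X (WZ_tri V X (TensorProduct.assoc k H H H
            (t ⊗ₜ c)) (v ⊗ₜ φ)) = c • φ ((LinearMap.mul' k H (TensorProduct.comm k H H
          (LinearMap.lTensor H (HopfAlgebra.antipode k) t))) • v) := by
          intro t
          induction t with
          | zero => simp
          | add a b ha hb => simp only [map_add, LinearMap.add_apply, ha, hb, smul_add, add_smul,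
              TensorProduct.add_tmul]
          | tmul a b =>
            rw [TensorProduct.assoc_tmul, WZ_tri_tmul]
            simp [WZ_ev, WZ_hom2_apply, mul_smul]
        rw [LinearMap.rTensor_tmul, h2, WZ_S21 hinv]
        simp only [LinearMap.rTensor_tmul, LinearMap.toSpanSingleton_apply, TensorProduct.comm_tmul,
          WZ_pi_tmul, algebraMap_smul, map_smul]
    rw [h1, Coalgebra.rTensor_counit_comul]
    simp [WZ_pi_tmul, WZ_ev]

/-- coevaluation -/
noncomputable def WZ_co {n : ℕ} (b : Module.Basis (Fin n) k V) (C : Module.End k V) :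
    X →ₗ[k] V ⊗[k] (V →ₗ[k] X) :=
  ∑ i, (TensorProduct.mk k V (V →ₗ[k] X) (b i)).comp
    ((LinearMap.smulRightₗ ((b.coord i).comp C)))

theorem WZ_co_apply {n : ℕ} (b : Module.Basis (Fin n) k V) (C : Module.End k V) (x : X) :
    WZ_co b C x = ∑ i, b i ⊗ₜ[k] (((b.coord i).comp C).smulRight x) := by
  simp [WZ_co, LinearMap.sum_apply]

theorem WZ_co_add {n : ℕ} (b : Module.Basis (Fin n) k V) (C D : Module.End k V) (x : X) :
    WZ_co b (C + D) x = WZ_co b C x + WZ_co b D x := by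
  rw [WZ_co_apply, WZ_co_apply, WZ_co_apply, ← Finset.sum_add_distrib]
  refine Finset.sum_congr rfl fun i _ => ?_
  rw [← TensorProduct.tmul_add]
  congr 1
  ext v
  simp [add_smul]

theorem WZ_co_smul {n : ℕ} (b : Module.Basis (Fin n) k V) (r : k) (x : X) :
    WZ_co b (r • (1 : Module.End k V)) x = r • WZ_co b 1 x := by
  rw [WZ_co_apply, WZ_co_apply, Finset.smul_sum]
  refine Finset.sum_congr rfl fun i _ => ?_
  rw [← TensorProduct.tmul_smul]
  congr 1
  ext v
  simp [mul_smul]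

theorem WZ_co_zero {n : ℕ} (b : Module.Basis (Fin n) k V) (x : X) :
    WZ_co b (0 : Module.End k V) x = 0 := by
  have := WZ_co_smul b (0 : k) x
  rwa [zero_smul, zero_smul] at this

theorem WZ_co_mul {n : ℕ} (b : Module.Basis (Fin n) k V) (A B : Module.End k V) (x : X) :
    ∑ i, (A (b i)) ⊗ₜ[k] (((b.coord i).comp B).smulRight x) = WZ_co b (A * B) x := by
  rw [WZ_co_apply]
  have h1 : ∀ i, A (b i) = ∑ j, b.coord j (A (b i)) • b j := fun i =>
    (b.sum_repr (A (b i))).symm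
  have h2 : ∀ i, (A (b i)) ⊗ₜ[k] (((b.coord i).comp B).smulRight x) =
      ∑ j, (b.coord j (A (b i)) • b j) ⊗ₜ[k] (((b.coord i).comp B).smulRight x) := by
    intro i
    rw [← TensorProduct.sum_tmul, ← h1]
  rw [Finset.sum_congr rfl fun i _ => h2 i, Finset.sum_comm]
  refine Finset.sum_congr rfl fun j _ => ?_
  simp_rw [TensorProduct.smul_tmul]
  rw [← TensorProduct.tmul_sum]
  congr 1
  ext v
  simp only [LinearMap.sum_apply, LinearMap.smul_apply, LinearMap.smulRight_apply,
    LinearMap.comp_apply, Module.End.mul_apply, smul_smul]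
  rw [← Finset.sum_smul]
  congr 1
  conv_rhs => rw [← b.sum_repr (B v), map_sum, map_sum]
  refine Finset.sum_congr rfl fun i _ => ?_
  rw [map_smul, map_smul, smul_eq_mul, mul_comm]
  rfl

theorem WZ_co_lin {n : ℕ} (b : Module.Basis (Fin n) k V) (h : H) (x : X) :
    WZ_co b 1 (h • x) = WZ_tens (Algebra.lsmul k k V) (WZ_homrep (k := k) V X) h (WZ_co b 1 x) := by
  rw [WZ_tens_tri]
  have h1 : ∀ t : H ⊗[k] H, (WZ_tri V X (TensorProduct.assoc k H H H
        (LinearMap.rTensor H (CoalgebraStruct.comul (R := k)) t)) (WZ_co b 1 x)) =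
        WZ_co b 1 (TensorProduct.lift ((Algebra.lsmul k k X (A := H)).toLinearMap.flip.comp
          (LinearMap.toSpanSingleton k X x))
          (LinearMap.rTensor H (CoalgebraStruct.counit (R := k)) t)) := by
    intro t
    induction t with
    | zero => simp
    | add a b ha hb => simp only [map_add, LinearMap.add_apply, ha, hb]
    | tmul a c =>
      have h2 : ∀ t : H ⊗[k] H, (WZ_tri V X (TensorProduct.assoc k H H H
            (t ⊗ₜ c)) (WZ_co b 1 x)) = WZ_co b (Algebra.lsmul k k V (LinearMap.mul' k H
          (LinearMap.lTensor H (HopfAlgebra.antipode k) t))) (c • x) := by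
        intro t
        induction t with
        | zero => simp [WZ_co_zero]
        | add a b ha hb => simp only [map_add, LinearMap.add_apply, ha, hb, WZ_co_add,
              TensorProduct.add_tmul]
        | tmul p q =>
          rw [TensorProduct.assoc_tmul, WZ_co_apply, map_sum]
          simp_rw [WZ_tri_tmul]
          rw [LinearMap.lTensor_tmul, LinearMap.mul'_apply, map_mul, ← WZ_co_mul]
          refine Finset.sum_congr rfl fun i _ => ?_
          congr 1
          ext v
          rw [WZ_hom2_apply]
          simp only [LinearMap.smulRight_apply, LinearMap.comp_apply, Module.End.one_apply,
            Algebra.lsmul_apply]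
          exact smul_comm _ _ _
      rw [LinearMap.rTensor_tmul, h2, HopfAlgebra.mul_antipode_lTensor_comul_apply,
        AlgHom.commutes, Algebra.algebraMap_eq_smul_one, WZ_co_smul]
      simp
  rw [h1, Coalgebra.rTensor_counit_comul]
  simp

theorem WZ_ev_co {n : ℕ} (b : Module.Basis (Fin n) k V) (x : X) :
    WZ_ev k V X (WZ_co b 1 x) = (n : k) • x := by
  rw [WZ_co_apply, map_sum]
  simp [WZ_ev, Nat.cast_smul_eq_nsmul]

theorem WZ_PD_all
    (hinv : ∀ h : H, HopfAlgebra.antipode (R := k) (HopfAlgebra.antipode (R := k) h) = h)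
    [FiniteDimensional k V] (hV : (Module.finrank k V : k) ≠ 0) (n : ℕ) (hn : WZ_PD H (n + 1) V) :
    WZ_PD H (n + 1) X := by
  let b := Module.finBasis k V
  let E : WZ_Mod (WZ_tens (Algebra.lsmul k k V) (WZ_homrep (k := k) V X)) →ₗ[H] X :=
    WZ_Mod_hom2 _ (WZ_ev k V X) (WZ_ev_lin hinv)
  let r : X →ₗ[H] X :=
    { toFun := fun x => (Module.finrank k V : k)⁻¹ • x
      map_add' := by simp
      map_smul' := by intro h x; exact smul_comm _ _ _ }
  refine WZ_PD_retract (WZ_PD_tens _ (WZ_homrep (k := k) V X) n V hn)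
    (WZ_Mod_hom _ (WZ_co b 1) (WZ_co_lin b)) (r.comp E) ?_
  intro x
  change (Module.finrank k V : k)⁻¹ • (WZ_ev k V X (WZ_co b 1 x)) = x
  rw [WZ_ev_co, smul_smul, inv_mul_cancel₀ hV, one_smul]
end


open TensorProduct Pointwise

section
variable {H Z : Type u} [Ring H] [CommRing Z] [Algebra Z H] {N : ℕ} (x : Fin N → H)
  (ζ : Fin N → H →ₗ[Z] Z) (c : Z)

/-- coordinates on `H ⊗ M` -/
noncomputable def WZ_cd (M : Type u) [AddCommGroup M] [Module Z M] (i : Fin N) :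
    H ⊗[Z] M →ₗ[Z] M :=
  TensorProduct.lift ((LinearMap.lsmul Z M).comp (ζ i))

theorem WZ_cd_tmul (M : Type u) [AddCommGroup M] [Module Z M] (i : Fin N) (h : H) (m : M) :
    WZ_cd ζ M i (h ⊗ₜ m) = ζ i h • m := by simp [WZ_cd]

theorem WZ_cd_sum (hc : ∀ h : H, c • h = ∑ i, ζ i h • x i)
    (M : Type u) [AddCommGroup M] [Module Z M] (t : H ⊗[Z] M) :
    c • t = ∑ i, x i ⊗ₜ WZ_cd ζ M i t := by
  induction t with
  | zero => simp
  | add a b ha hb => simp only [smul_add, ha, hb, map_add, TensorProduct.tmul_add,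
      Finset.sum_add_distrib]
  | tmul h m =>
    rw [TensorProduct.smul_tmul', hc, TensorProduct.sum_tmul]
    simp [WZ_cd_tmul, TensorProduct.smul_tmul]

theorem WZ_cd_inj (hc : ∀ h : H, c • h = ∑ i, ζ i h • x i)
    {C : Type u} [CommRing C] [Algebra Z C] (hu : IsUnit (algebraMap Z C c))
    (M : Type u) [AddCommGroup M] [Module Z M] [Module C M] [IsScalarTower Z C M]
    (t : H ⊗[Z] M) (h : ∀ i, WZ_cd ζ M i t = 0) : t = 0 := by
  have h1 := WZ_cd_sum x ζ c hc M t
  simp only [h, TensorProduct.tmul_zero, Finset.sum_const_zero] at h1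
  obtain ⟨d, hd⟩ := hu.exists_left_inv
  let L : M →ₗ[Z] M := (LinearMap.lsmul C M d).restrictScalars Z
  have h2 : ∀ t : H ⊗[Z] M, LinearMap.lTensor H L (c • t) = t := by
    intro t
    induction t with
    | zero => simp
    | add a b ha hb => simp only [smul_add, ha, hb, map_add]
    | tmul h m =>
      rw [← TensorProduct.tmul_smul, LinearMap.lTensor_tmul]
      congr 1
      simp only [L, LinearMap.restrictScalars_apply, LinearMap.lsmul_apply]
      rw [← algebraMap_smul C c m, smul_smul, hd, one_smul]
  rw [← h2 t, h1, map_zero]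

/-- the `H`-linear map on `H ⊗ -` -/
noncomputable def WZ_bc (H : Type u) [Ring H] [Algebra Z H] {M M' : Type u} [AddCommGroup M]
    [Module Z M] [AddCommGroup M'] [Module Z M'] (f : M →ₗ[Z] M') : H ⊗[Z] M →ₗ[H] H ⊗[Z] M' :=
  TensorProduct.AlgebraTensorModule.map LinearMap.id f

theorem WZ_bc_apply {M M' : Type u} [AddCommGroup M]
    [Module Z M] [AddCommGroup M'] [Module Z M'] (f : M →ₗ[Z] M') (t : H ⊗[Z] M) :
    WZ_bc H f t = LinearMap.lTensor H f t := rfl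

theorem WZ_PD_quot (hc : ∀ h : H, c • h = ∑ i, ζ i h • x i)
    {C : Type u} [CommRing C] [Algebra Z C] (hu : IsUnit (algebraMap Z C c))
    (M : Type u) [AddCommGroup M] [Module Z M] [Module C M] [IsScalarTower Z C M]
    (s : C) (hs : IsSMulRegular M s) (n : ℕ) (hn : WZ_PD H n (H ⊗[Z] M)) :
    WZ_PD H (n + 1) (H ⊗[Z] (QuotSMulTop s M)) := by
  let L : M →ₗ[Z] M := (LinearMap.lsmul C M s).restrictScalars Z
  let Q : M →ₗ[Z] QuotSMulTop s M := (Submodule.mkQ (s • (⊤ : Submodule C M))).restrictScalars Z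
  have hQ : Function.Surjective Q := by
    intro y
    obtain ⟨a, ha⟩ := Submodule.mkQ_surjective (s • (⊤ : Submodule C M)) y
    exact ⟨a, ha⟩
  have hLQ : Function.Exact L Q := by
    intro y
    change Submodule.mkQ (s • (⊤ : Submodule C M)) y = 0 ↔ _
    rw [Submodule.mkQ_apply, Submodule.Quotient.mk_eq_zero, Submodule.mem_smul_pointwise_iff_exists]
    constructor
    · rintro ⟨b, -, rfl⟩; exact ⟨b, rfl⟩
    · rintro ⟨b, rfl⟩; exact ⟨b, trivial, rfl⟩
  refine WZ_PD_coker (WZ_bc H L) (WZ_bc H Q) ?_ ?_ ?_ hn (WZ_PD_mono hn (by omega))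
  · rw [injective_iff_map_eq_zero]
    intro t ht
    apply WZ_cd_inj x ζ c hc hu M t
    intro i
    apply hs
    have h3 : ∀ t, WZ_cd ζ M i (WZ_bc H L t) = s • WZ_cd ζ M i t := by
      intro t
      induction t with
      | zero => simp
      | add a b ha hb => simp only [smul_add, ha, hb, map_add]
      | tmul h m =>
        rw [WZ_bc_apply, LinearMap.lTensor_tmul, WZ_cd_tmul, WZ_cd_tmul]
        exact smul_comm _ _ _
    beta_reduce
    rw [← h3, ht, map_zero, smul_zero]
  · exact LinearMap.lTensor_surjective H hQ
  · have h4 := lTensor_exact (M := M) (N := M) (P := QuotSMulTop s M) H (f := L) (g := Q) hLQ hQ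
    exact h4

theorem WZ_PD_list (hc : ∀ h : H, c • h = ∑ i, ζ i h • x i)
    {C : Type u} [CommRing C] [Algebra Z C] (hu : IsUnit (algebraMap Z C c)) (rs : List C) :
    ∀ (M : Type u) [AddCommGroup M] [Module Z M] [Module C M] [IsScalarTower Z C M]
    (_ : RingTheory.Sequence.IsWeaklyRegular M rs) (n : ℕ) (_ : WZ_PD H n (H ⊗[Z] M)),
    WZ_PD H (n + rs.length) (H ⊗[Z] (M ⧸ (Ideal.ofList rs • ⊤ : Submodule C M))) := by
  induction rs with
  | nil =>
    intro M _ _ _ _ _ n hn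
    have hb : (Ideal.ofList ([] : List C) • ⊤ : Submodule C M) = ⊥ := by simp
    let e : (M ⧸ (Ideal.ofList ([] : List C) • ⊤ : Submodule C M)) ≃ₗ[C] M :=
      Submodule.quotEquivOfEqBot _ hb
    exact WZ_PD_equiv hn (TensorProduct.AlgebraTensorModule.congr (LinearEquiv.refl H H)
      (e.restrictScalars Z))
  | cons r rs ih =>
    intro M _ _ _ _ hreg n hn
    rw [RingTheory.Sequence.isWeaklyRegular_cons_iff] at hreg
    have h1 := ih (QuotSMulTop r M) hreg.2 (n + 1) (WZ_PD_quot x ζ c hc hu M r hreg.1 n hn)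
    let e := Submodule.quotOfListConsSMulTopEquivQuotSMulTopInner M r rs
    rw [List.length_cons, show n + (rs.length + 1) = n + 1 + rs.length by omega]
    exact WZ_PD_equiv h1 (TensorProduct.AlgebraTensorModule.congr (LinearEquiv.refl H H)
      (e.restrictScalars Z))
end


open TensorProduct Pointwise

section
variable {H Z : Type u} [Ring H] [CommRing Z] [Algebra Z H]

theorem WZ_away_ker (C : Type u) [CommRing C] [Algebra Z C] (f : Z) [IsLocalization.Away f C]
    (h : H) (hh : h ⊗ₜ[Z] (1 : C) = 0) : ∃ m : ℕ, f ^ m • h = 0 := by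
  have h1 : IsLocalizedModule (Submonoid.powers f) (TensorProduct.mk Z C H 1) :=
    (isLocalizedModule_iff_isBaseChange (Submonoid.powers f) C _).2
      (TensorProduct.isBaseChange Z H C)
  have h2 : TensorProduct.mk Z C H 1 h = 0 := by
    rw [TensorProduct.mk_apply, ← TensorProduct.comm_tmul, hh, map_zero]
  rw [IsLocalizedModule.eq_zero_iff (Submonoid.powers f)] at h2
  obtain ⟨⟨_, m, rfl⟩, hm⟩ := h2
  exact ⟨m, hm⟩

theorem WZ_PD_away (C : Type u) [CommRing C] [Algebra Z C] (f : Z) [IsLocalization.Away f C] :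
    WZ_PD H 2 (H ⊗[Z] C) := by
  let i : C := IsLocalization.Away.invSelf f
  have hi : algebraMap Z C f * i = 1 := IsLocalization.Away.mul_invSelf f
  let φ : (ℕ →₀ H) →ₗ[H] (ℕ →₀ H) := Finsupp.lsum ℕ fun n =>
    (LinearMap.toSpanSingleton H (ℕ →₀ H) (Finsupp.single (n + 1) (algebraMap Z H f) -
      Finsupp.single n 1))
  let ψ : (ℕ →₀ H) →ₗ[H] H ⊗[Z] C := Finsupp.lsum ℕ fun n =>
    (LinearMap.toSpanSingleton H (H ⊗[Z] C) (1 ⊗ₜ (i ^ n)))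
  have hφ : ∀ n h, φ (Finsupp.single n h) = Finsupp.single (n + 1) (f • h) - Finsupp.single n h := by
    intro n h
    simp only [φ, Finsupp.lsum_single, LinearMap.toSpanSingleton_apply, smul_sub,
      Finsupp.smul_single, smul_eq_mul, mul_one]
    rw [Algebra.smul_def, Algebra.commutes]
  have hψ : ∀ n h, ψ (Finsupp.single n h) = h ⊗ₜ (i ^ n) := by
    intro n h
    simp only [ψ, Finsupp.lsum_single, LinearMap.toSpanSingleton_apply,
      TensorProduct.smul_tmul', smul_eq_mul, mul_one]
  have hψφ : ∀ l, ψ (φ l) = 0 := by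
    intro l
    induction l using Finsupp.induction_linear with
    | zero => simp
    | add a b ha hb => simp only [map_add, ha, hb, add_zero]
    | single n h =>
      rw [hφ, map_sub, hψ, hψ, TensorProduct.smul_tmul, Algebra.smul_def, pow_succ', ← mul_assoc,
        hi, one_mul, sub_self]
  have hstep : ∀ m n h, ∃ l, Finsupp.single n h = Finsupp.single (n + m) (f ^ m • h) + φ l := by
    intro m
    induction m with
    | zero => intro n h; exact ⟨0, by simp⟩
    | succ m ih =>
      intro n h
      obtain ⟨l, hl⟩ := ih n h
      refine ⟨l - Finsupp.single (n + m) (f ^ m • h), ?_⟩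
      rw [hl, map_sub, hφ, smul_smul, ← pow_succ', ← add_assoc]
      abel
  have hred : ∀ l : ℕ →₀ H, ∃ n h l', l = Finsupp.single n h + φ l' := by
    intro l
    induction l using Finsupp.induction_linear with
    | zero => exact ⟨0, 0, 0, by simp⟩
    | add a b ha hb =>
      obtain ⟨n, h, l, rfl⟩ := ha
      obtain ⟨n', h', l', rfl⟩ := hb
      obtain ⟨p, hp⟩ := hstep n' n h
      obtain ⟨p', hp'⟩ := hstep n n' h'
      refine ⟨n + n', f ^ n' • h + f ^ n • h', l + l' + p + p', ?_⟩
      rw [hp, hp', Finsupp.single_add, add_comm n' n]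
      simp only [map_add]
      abel
    | single n h => exact ⟨n, h, 0, by simp⟩
  have hproj : WZ_PD H 1 (ℕ →₀ H) := WZ_PD_one_iff.2 inferInstance
  refine WZ_PD_coker φ ψ ?_ ?_ ?_ hproj (WZ_PD_mono hproj (by omega))
  · rw [injective_iff_map_eq_zero]
    intro l hl
    have hcoord : ∀ l : ℕ →₀ H, ∀ n, φ l (n + 1) = f • l n - l (n + 1) := by
      intro l n
      induction l using Finsupp.induction_linear with
      | zero => simp
      | add a b ha hb => simp only [map_add, Finsupp.add_apply, ha, hb, smul_add]; abel
      | single m h =>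
        rw [hφ, Finsupp.sub_apply]
        simp only [Finsupp.single_apply, Nat.add_right_cancel_iff]
        split_ifs <;> simp
    have hcoord0 : ∀ l : ℕ →₀ H, φ l 0 = - l 0 := by
      intro l
      induction l using Finsupp.induction_linear with
      | zero => simp
      | add a b ha hb => simp only [map_add, Finsupp.add_apply, ha, hb]; abel
      | single m h =>
        rw [hφ, Finsupp.sub_apply]
        simp [Finsupp.single_apply]
    ext n
    induction n with
    | zero => have := hcoord0 l; rw [hl] at this; simpa using this
    | succ n ih => have := hcoord l n; rw [hl, ih] at this; simpa using this
  · intro t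
    induction t with
    | zero => exact ⟨0, map_zero _⟩
    | add a b ha hb =>
      obtain ⟨p, rfl⟩ := ha
      obtain ⟨q, rfl⟩ := hb
      exact ⟨p + q, map_add _ _ _⟩
    | tmul h d =>
      obtain ⟨⟨z, ⟨_, n, rfl⟩⟩, hz⟩ := IsLocalization.surj (Submonoid.powers f) d
      refine ⟨Finsupp.single n (z • h), ?_⟩
      rw [hψ, TensorProduct.smul_tmul, Algebra.smul_def]
      congr 1
      simp only [map_pow] at hz
      rw [← hz, mul_assoc, ← mul_pow, hi, one_pow, mul_one]
  · intro l
    constructor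
    · intro hl
      obtain ⟨n, h, l', rfl⟩ := hred l
      rw [map_add, hψφ, add_zero, hψ] at hl
      have h1 : h ⊗ₜ[Z] (1 : C) = 0 := by
        have h2 : f ^ n • (h ⊗ₜ[Z] (i ^ n)) = 0 := by rw [hl, smul_zero]
        rwa [← TensorProduct.tmul_smul, Algebra.smul_def, map_pow, ← mul_pow, hi, one_pow] at h2
      obtain ⟨m, hm⟩ := WZ_away_ker C f h h1
      obtain ⟨p, hp⟩ := hstep m n h
      rw [hp, hm, Finsupp.single_zero, zero_add]
      exact ⟨p + l', map_add _ _ _⟩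
    · rintro ⟨l', rfl⟩
      exact hψφ l'
end


open TensorProduct

section
variable {k : Type u'} [Field k] {H Z : Type u} [Ring H] [CommRing Z] [Algebra Z H]
  [Algebra k H] [Algebra k Z] [IsScalarTower k Z H] {N : ℕ} (x e : Fin N → H)
  (ζ : Fin N → H →ₗ[Z] Z) (c : Z)

theorem WZ_T_finite (hc : ∀ h : H, c • h = ∑ i, ζ i h • x i)
    (D : Type u) [CommRing D] [Algebra Z D] [Algebra k D] [IsScalarTower k Z D]
    [Module.Finite k D] (hu : IsUnit (algebraMap Z D c)) : Module.Finite k (H ⊗[Z] D) := by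
  let F : (Fin N → D) →ₗ[k] H ⊗[Z] D :=
    { toFun := fun v => ∑ i, x i ⊗ₜ v i
      map_add' := by intro v w; simp [TensorProduct.tmul_add, Finset.sum_add_distrib]
      map_smul' := by
        intro r v
        simp only [Pi.smul_apply, RingHom.id_apply, Finset.smul_sum]
        refine Finset.sum_congr rfl fun i _ => ?_
        rw [← algebraMap_smul Z r (v i), TensorProduct.tmul_smul, TensorProduct.smul_tmul',
          algebraMap_smul, TensorProduct.smul_tmul'] }
  apply Module.Finite.of_surjective F
  intro t
  obtain ⟨d, hd⟩ := hu.exists_right_inv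
  have h2 : ∀ t : H ⊗[Z] D, c • LinearMap.lTensor H (LinearMap.mulLeft Z d) t = t := by
    intro t
    induction t with
    | zero => simp
    | add a b ha hb => simp only [smul_add, ha, hb, map_add]
    | tmul h m =>
      rw [LinearMap.lTensor_tmul, ← TensorProduct.tmul_smul]
      congr 1
      simp only [LinearMap.mulLeft_apply]
      rw [Algebra.smul_def, ← mul_assoc, hd, one_mul]
  refine ⟨fun i => WZ_cd ζ D i (LinearMap.lTensor H (LinearMap.mulLeft Z d) t), ?_⟩
  rw [← h2 t]
  conv_rhs => rw [WZ_cd_sum x ζ c hc]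
  rw [h2]
  rfl

theorem WZ_T_inj (hx : ∀ i, ζ i (x i) = c) (i : Fin N)
    (D : Type u) [CommRing D] [Algebra Z D] (hu : IsUnit (algebraMap Z D c)) (d : D)
    (hd : (1 : H) ⊗ₜ[Z] d = 0) : d = 0 := by
  have h1 : WZ_cd ζ D i ((x i ⊗ₜ[Z] (1 : D)) * ((1 : H) ⊗ₜ[Z] d)) = 0 := by
    rw [hd, mul_zero, map_zero]
  rw [Algebra.TensorProduct.tmul_mul_tmul, mul_one, one_mul, WZ_cd_tmul, hx, Algebra.smul_def] at h1
  exact (hu.mul_right_eq_zero).1 h1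

theorem WZ_T_semisimple (hc : ∀ h : H, c • h = ∑ i, ζ i h • x i) (hx : ∀ i, ζ i (x i) = c)
    (hζ : ∀ i h, algebraMap Z H (ζ i h) = ∑ j, e j * (h * e i) * x j)
    (D : Type u) [CommRing D] [Algebra Z D] [Algebra k D] [IsScalarTower k Z D]
    [Module.Finite k D] [IsReduced D] (hu : IsUnit (algebraMap Z D c)) :
    IsSemisimpleRing (H ⊗[Z] D) := by
  have hfin := WZ_T_finite (k := k) x ζ c hc D hu
  have hart : IsArtinianRing (H ⊗[Z] D) := IsArtinianRing.of_finite k _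
  rw [IsArtinianRing.isSemisimpleRing_iff_jacobson, eq_bot_iff]
  intro a ha
  have hnil : IsNilpotent (Ring.jacobson (H ⊗[Z] D)) := IsSemiprimaryRing.isNilpotent
  obtain ⟨m, hm⟩ := hnil
  have key : ∀ i (t : H ⊗[Z] D), (1 : H) ⊗ₜ[Z] (WZ_cd ζ D i t) =
      ∑ j, (e j ⊗ₜ[Z] (1 : D)) * t * ((e i * x j) ⊗ₜ[Z] (1 : D)) := by
    intro i t
    induction t with
    | zero => simp
    | add a b ha hb =>
      rw [map_add, TensorProduct.tmul_add, ha, hb, ← Finset.sum_add_distrib]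
      refine Finset.sum_congr rfl fun j _ => ?_
      rw [mul_add, add_mul]
    | tmul h d =>
      rw [WZ_cd_tmul, ← TensorProduct.smul_tmul, ← Algebra.algebraMap_eq_smul_one, hζ,
        TensorProduct.sum_tmul]
      refine Finset.sum_congr rfl fun j _ => ?_
      simp only [Algebra.TensorProduct.tmul_mul_tmul, one_mul, mul_one, mul_assoc]
  rw [Ideal.mem_bot]
  apply WZ_cd_inj x ζ c hc hu D a
  intro i
  apply IsReduced.eq_zero
  refine ⟨m, ?_⟩
  apply WZ_T_inj x ζ c hx i D hu
  have h1 : (1 : H) ⊗ₜ[Z] (WZ_cd ζ D i a) ∈ Ring.jacobson (H ⊗[Z] D) := by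
    rw [key]
    refine Submodule.sum_mem _ fun j _ => ?_
    exact Ideal.mul_mem_right _ _ (Ideal.mul_mem_left _ _ ha)
  have h2 := Ideal.pow_mem_pow h1 m
  rw [hm, Algebra.TensorProduct.tmul_pow, one_pow] at h2
  exact h2

theorem WZ_T_simple (i : Fin N) (hc : ∀ h : H, c • h = ∑ i, ζ i h • x i) (hx : ∀ i, ζ i (x i) = c)
    (hζ : ∀ i h, algebraMap Z H (ζ i h) = ∑ j, e j * (h * e i) * x j)
    (D : Type u) [CommRing D] [Algebra Z D] [Algebra k D] [IsScalarTower k Z D]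
    [Module.Finite k D] [IsReduced D] [Nontrivial D] (hu : IsUnit (algebraMap Z D c))
    (hsurj : Function.Surjective (algebraMap Z D)) :
    ∃ V : Submodule H (H ⊗[Z] D), IsSimpleModule H V ∧ Module.Finite k V ∧
      ∃ p : H ⊗[Z] D →ₗ[H] V, ∀ v : V, p v = v := by
  have hfin := WZ_T_finite (k := k) x ζ c hc D hu
  have hss := WZ_T_semisimple (k := k) x e ζ c hc hx hζ D hu
  let σ : H →+* H ⊗[Z] D := Algebra.TensorProduct.includeLeftRingHom
  have hσ : Function.Surjective σ := by
    intro t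
    induction t with
    | zero => exact ⟨0, map_zero _⟩
    | add a b ha hb =>
      obtain ⟨p, rfl⟩ := ha
      obtain ⟨q, rfl⟩ := hb
      exact ⟨p + q, map_add _ _ _⟩
    | tmul h d =>
      obtain ⟨z, rfl⟩ := hsurj d
      refine ⟨z • h, ?_⟩
      change (z • h) ⊗ₜ[Z] (1 : D) = _
      rw [TensorProduct.smul_tmul, Algebra.algebraMap_eq_smul_one]
  have : RingHomSurjective σ := ⟨hσ⟩
  let E : (H ⊗[Z] D) →ₛₗ[σ] (H ⊗[Z] D) :=
    { AddMonoidHom.id (H ⊗[Z] D) with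
      map_smul' := by
        intro h t
        change h • t = σ h * t
        induction t with
        | zero => simp
        | add a b ha hb => rw [smul_add, ha, hb, mul_add]
        | tmul g d =>
          change h • (g ⊗ₜ[Z] d) = (h ⊗ₜ[Z] (1 : D)) * (g ⊗ₜ[Z] d)
          rw [Algebra.TensorProduct.tmul_mul_tmul, TensorProduct.smul_tmul', one_mul, smul_eq_mul] }
  have hssH : IsSemisimpleModule H (H ⊗[Z] D) :=
    (E.isSemisimpleModule_iff_of_bijective Function.bijective_id).2 hss
  have hnt : Nontrivial (H ⊗[Z] D) := by
    refine ⟨⟨(1 : H) ⊗ₜ[Z] (1 : D), 0, fun h => ?_⟩⟩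
    exact one_ne_zero (WZ_T_inj x ζ c hx i D hu 1 h)
  obtain ⟨V, hV⟩ := IsSemisimpleModule.exists_simple_submodule H (H ⊗[Z] D)
  obtain ⟨W, hW⟩ := exists_isCompl V
  refine ⟨V, hV, ?_, Submodule.projectionOnto V W hW, fun v => ?_⟩
  · exact Module.Finite.of_injective (V.subtype.restrictScalars k) (Submodule.subtype_injective V)
  · simp

theorem WZ_surj_of_away (f : Z) (C : Type u) [CommRing C] [Algebra Z C] [IsLocalization.Away f C]
    (D : Type u) [CommRing D] [Algebra Z D] [Algebra k D] [IsScalarTower k Z D] [Algebra C D]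
    [IsScalarTower Z C D] (hCD : Function.Surjective (algebraMap C D))
    [Module.Finite k D] : Function.Surjective (algebraMap Z D) := by
  let R := (IsScalarTower.toAlgHom k Z D).range
  have hR : IsArtinianRing R := IsArtinianRing.of_finite k _
  have hfu : IsUnit (algebraMap Z D f) := by
    rw [IsScalarTower.algebraMap_apply Z C D]
    exact (IsLocalization.Away.algebraMap_isUnit f).map _
  let φ : R := ⟨algebraMap Z D f, f, rfl⟩
  have hφ : IsUnit φ := by
    apply IsArtinianRing.isUnit_of_mem_nonZeroDivisors
    rw [mem_nonZeroDivisors_iff_right]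
    intro y hy
    have h1 : (y : D) * algebraMap Z D f = 0 := congrArg Subtype.val hy
    exact Subtype.ext ((hfu.mul_left_eq_zero).1 h1)
  obtain ⟨⟨_, g, rfl⟩, hg⟩ := hφ.exists_right_inv
  have hg' : algebraMap Z D f * algebraMap Z D g = 1 := congrArg Subtype.val hg
  intro d
  obtain ⟨y, rfl⟩ := hCD d
  obtain ⟨n, a, ha⟩ := IsLocalization.Away.surj f y
  refine ⟨a * g ^ n, ?_⟩
  have h2 := congrArg (algebraMap C D) ha
  rw [map_mul, map_pow, ← IsScalarTower.algebraMap_apply, ← IsScalarTower.algebraMap_apply] at h2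
  rw [map_mul, map_pow, ← h2, mul_assoc, ← mul_pow, hg', one_pow, mul_one]
end


open TensorProduct

section
variable {k : Type u'} [Field k] {H Z : Type u} [Ring H] [CommRing Z] [Algebra Z H]
  [Algebra k H] [Algebra k Z] [IsScalarTower k Z H] {N : ℕ} (x e : Fin N → H)
  (ζ : Fin N → H →ₗ[Z] Z) (c : Z)

theorem WZ_descent (i : Fin N) (hc : ∀ h : H, c • h = ∑ i, ζ i h • x i) (hx : ∀ i, ζ i (x i) = c)
    (hζ : ∀ i h, algebraMap Z H (ζ i h) = ∑ j, e j * (h * e i) * x j)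
    (f : Z) (C : Type u) [CommRing C] [Algebra Z C] [IsLocalization.Away f C] [Algebra k C]
    [IsScalarTower k Z C] (hu : IsUnit (algebraMap Z C c)) (rs : List C)
    (hreg : RingTheory.Sequence.IsWeaklyRegular C rs)
    (hfin : Module.Finite k (C ⧸ Ideal.ofList rs)) (hred : IsReduced (C ⧸ Ideal.ofList rs))
    (hnt : Nontrivial (C ⧸ Ideal.ofList rs)) :
    ∃ V : Submodule H (H ⊗[Z] (C ⧸ Ideal.ofList rs)), IsSimpleModule H V ∧ Module.Finite k V ∧
      ∃ n, WZ_PD H (n + 1) V := by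
  have hu' : IsUnit (algebraMap Z (C ⧸ Ideal.ofList rs) c) := by
    rw [IsScalarTower.algebraMap_apply Z C (C ⧸ Ideal.ofList rs)]
    exact hu.map _
  have hsurj := WZ_surj_of_away (k := k) f C (C ⧸ Ideal.ofList rs) Ideal.Quotient.mk_surjective
  obtain ⟨V, h1, h2, p, hp⟩ := WZ_T_simple (k := k) x e ζ c i hc hx hζ (C ⧸ Ideal.ofList rs) hu' hsurj
  refine ⟨V, h1, h2, 1 + rs.length, ?_⟩
  have h3 := WZ_PD_list x ζ c hc hu rs C hreg 2 (WZ_PD_away C f)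
  have h4 : (Ideal.ofList rs • ⊤ : Submodule C C) = Ideal.ofList rs := by simp
  let E : (C ⧸ Ideal.ofList rs) ≃ₗ[C] (C ⧸ (Ideal.ofList rs • ⊤ : Submodule C C)) :=
    Submodule.quotEquivOfEq _ _ h4.symm
  have h5 := WZ_PD_equiv h3 (TensorProduct.AlgebraTensorModule.congr (LinearEquiv.refl H H)
      (E.restrictScalars Z))
  have h6 := WZ_PD_retract h5 V.subtype p hp
  rw [show 1 + rs.length + 1 = 2 + rs.length by omega]
  exact h6

theorem WZ_residue (i : Fin N) (hc : ∀ h : H, c • h = ∑ i, ζ i h • x i) (hx : ∀ i, ζ i (x i) = c)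
    (hζ : ∀ i h, algebraMap Z H (ζ i h) = ∑ j, e j * (h * e i) * x j)
    (C : Type u) [CommRing C] [Algebra Z C] [IsLocalization.Away c C] [Algebra k C]
    [IsScalarTower k Z C] (m : Ideal C) [m.IsMaximal] [Module.Finite k (C ⧸ m)]
    (hirr : ∀ (M : Type u) [AddCommGroup M] [Module H M] [Module k M]
      [IsScalarTower k H M], IsSimpleModule H M → FiniteDimensional k M →
        ¬ ((ringChar k : ℕ) ∣ Module.finrank k M)) :
    ¬ ((ringChar k : ℕ) ∣ Module.finrank k (C ⧸ m)) := by
  have hu : IsUnit (algebraMap Z C c) := IsLocalization.Away.algebraMap_isUnit c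
  have hu' : IsUnit (algebraMap Z (C ⧸ m) c) := by
    rw [IsScalarTower.algebraMap_apply Z C (C ⧸ m)]
    exact hu.map _
  have hsurj := WZ_surj_of_away (k := k) c C (C ⧸ m) Ideal.Quotient.mk_surjective
  letI := Ideal.Quotient.field m
  obtain ⟨V, h1, h2, -⟩ := WZ_T_simple (k := k) x e ζ c i hc hx hζ (C ⧸ m) hu' hsurj
  intro hdvd
  apply hirr V h1 h2
  refine hdvd.trans ?_
  let sec : C ⧸ m → Z := Function.surjInv hsurj
  have hsec : ∀ d, algebraMap Z (C ⧸ m) (sec d) = d := Function.surjInv_eq hsurj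
  have hact : ∀ (z w : Z) (t : H ⊗[Z] (C ⧸ m)), algebraMap Z (C ⧸ m) z = algebraMap Z (C ⧸ m) w →
      z • t = w • t := by
    intro z w t h
    induction t with
    | zero => simp
    | add a b ha hb => rw [smul_add, ha, hb, smul_add]
    | tmul g d => rw [← TensorProduct.tmul_smul, ← TensorProduct.tmul_smul, Algebra.smul_def, h,
        Algebra.smul_def]
  have hact' : ∀ (z w : Z) (t : V), algebraMap Z (C ⧸ m) z = algebraMap Z (C ⧸ m) w →
      z • t = w • t := by
    intro z w t h
    exact Subtype.ext (hact z w t h)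
  letI : Module (C ⧸ m) V :=
    { smul := fun d v => sec d • v
      one_smul := fun v => (hact' (sec 1) 1 v (by rw [hsec, map_one])).trans (one_smul _ _)
      mul_smul := fun a b v => (hact' (sec (a * b)) (sec a * sec b) v
        (by rw [map_mul, hsec, hsec, hsec])).trans (mul_smul _ _ _)
      smul_zero := fun a => smul_zero (sec a)
      smul_add := fun a v w => smul_add (sec a) v w
      add_smul := fun a b v => (hact' (sec (a + b)) (sec a + sec b) v
        (by rw [map_add, hsec, hsec, hsec])).trans (add_smul _ _ _)
      zero_smul := fun v => (hact' (sec 0) 0 v (by rw [hsec, map_zero])).trans (zero_smul _ _) }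
  have htow : IsScalarTower k (C ⧸ m) V := by
    refine ⟨fun r d v => ?_⟩
    change sec (r • d) • v = r • (sec d • v)
    rw [hact' (sec (r • d)) (r • sec d) v, smul_assoc]
    rw [hsec, Algebra.algebraMap_eq_smul_one, smul_assoc, ← Algebra.algebraMap_eq_smul_one, hsec]
  have := Module.finrank_mul_finrank k (C ⧸ m) V
  exact ⟨_, this.symm⟩
end


section
variable {k : Type u'} [Field k] {H Z : Type u} [Ring H] [CommRing Z] [Algebra Z H]
  [Algebra k H] [Algebra k Z] [IsScalarTower k Z H] {N : ℕ} (x : Fin N → H)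
  (ζ : Fin N → H →ₗ[Z] Z) (c : Z)

theorem WZ_affine (i : Fin N) (hc : ∀ h : H, c • h = ∑ i, ζ i h • x i) (hx : ∀ i, ζ i (x i) = c)
    (A : Type u) [CommRing A] [Algebra Z A] [IsLocalization.Away c A] [Algebra k A]
    [IsScalarTower k Z A] (haff : Algebra.FiniteType k H) : Algebra.FiniteType k A := by
  obtain ⟨⟨S, hS⟩⟩ := haff
  let I : A := IsLocalization.Away.invSelf c
  have hI : algebraMap Z A c * I = 1 := IsLocalization.Away.mul_invSelf c
  let G : Set A := {I} ∪ (Set.range fun j => algebraMap Z A (ζ j 1)) ∪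
    (Set.range fun p : Fin N × Fin N × S => algebraMap Z A (ζ p.1 (x p.2.1 * p.2.2)))
  have hG : G.Finite := ((Set.finite_singleton I).union (Set.finite_range _)).union (Set.finite_range _)
  let B := Algebra.adjoin k G
  have hGB : G ⊆ B := Algebra.subset_adjoin
  have hIB : I ∈ B := hGB (Or.inl (Or.inl rfl))
  have hdiv : ∀ z : Z, algebraMap Z A (c * z) ∈ B → algebraMap Z A z ∈ B := by
    intro z hz
    have h1 := B.mul_mem hIB hz
    rwa [map_mul, ← mul_assoc, mul_comm I, hI, one_mul] at h1
  let W : Submodule k H :=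
    { carrier := {h | ∀ j, algebraMap Z A (ζ j h) ∈ B}
      add_mem' := by
        intro a b ha hb j
        rw [map_add, map_add]
        exact B.add_mem (ha j) (hb j)
      zero_mem' := by intro j; rw [map_zero, map_zero]; exact B.zero_mem
      smul_mem' := by
        intro r h hh j
        rw [← algebraMap_smul Z r h, map_smul, smul_eq_mul, map_mul,
          ← IsScalarTower.algebraMap_apply]
        exact B.mul_mem (B.algebraMap_mem r) (hh j) }
  have hW : ∀ h ∈ Submonoid.closure (S : Set H), h ∈ W := by
    intro h hh
    induction hh using Submonoid.closure_induction_right with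
    | one => intro j; exact hGB (Or.inl (Or.inr ⟨j, rfl⟩))
    | mul_right h hh g hg ih =>
      intro j
      apply hdiv
      have h1 : c * ζ j (h * g) = ∑ i, ζ i h * ζ j (x i * g) := by
        rw [← smul_eq_mul, ← map_smul, ← smul_mul_assoc, hc, Finset.sum_mul, map_sum]
        refine Finset.sum_congr rfl fun l _ => ?_
        rw [smul_mul_assoc, map_smul, smul_eq_mul]
      rw [h1, map_sum]
      refine B.sum_mem fun l _ => ?_
      rw [map_mul]
      exact B.mul_mem (ih l) (hGB (Or.inr ⟨(j, l, ⟨g, hg⟩), rfl⟩))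
  have hall : ∀ h : H, h ∈ W := by
    intro h
    have h1 : h ∈ Algebra.adjoin k (S : Set H) := by rw [hS]; trivial
    rw [← Subalgebra.mem_toSubmodule, Algebra.adjoin_eq_span] at h1
    exact (Submodule.span_le.2 hW) h1
  have hZ : ∀ z : Z, algebraMap Z A z ∈ B := by
    intro z
    apply hdiv
    have h1 := hall (z • x i) i
    rwa [map_smul, hx, smul_eq_mul, mul_comm] at h1
  have htop : B = ⊤ := by
    rw [eq_top_iff]
    intro a _
    obtain ⟨n, z, ha⟩ := IsLocalization.Away.surj c a
    have h2 : a = algebraMap Z A z * I ^ n := by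
      rw [← ha, mul_assoc, ← mul_pow, hI, one_pow, mul_one]
    rw [h2]
    exact B.mul_mem (hZ z) (B.pow_mem hIB n)
  refine ⟨?_⟩
  rw [← htop]
  exact ⟨hG.toFinset, by rw [Set.Finite.coe_toFinset]⟩
end


section
open Polynomial

theorem WZ_exists_domain (A : Type u) [CommRing A] [IsNoetherianRing A] [IsReduced A]
    [Nontrivial A] : ∃ g : A, IsDomain (Localization.Away g) := by
  classical
  obtain ⟨p, hp⟩ : (minimalPrimes A).Nonempty := by
    obtain ⟨m, hm⟩ := Ideal.exists_maximal A
    obtain ⟨p, hp, -⟩ := Ideal.exists_minimalPrimes_le (I := ⊥) (J := m) bot_le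
    exact ⟨p, hp⟩
  have hpp : p.IsPrime := hp.1.1
  have hfin := minimalPrimes.finite_of_isNoetherianRing A
  let s := hfin.toFinset.erase p
  have h1 : ¬ (s.inf id ≤ p) := by
    intro h
    obtain ⟨q, hq, hqp⟩ := (Ideal.IsPrime.inf_le' hpp).1 h
    rw [Finset.mem_erase, Set.Finite.mem_toFinset] at hq
    exact hq.1 (le_antisymm hqp (hp.2 hq.2.1 hqp))
  obtain ⟨g, hg, hgp⟩ := SetLike.not_le_iff_exists.1 h1
  have hz : ∀ x ∈ p, g * x = 0 := by
    intro x hx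
    have : g * x ∈ nilradical A := by
      rw [nilradical, ← Ideal.sInf_minimalPrimes]
      rw [Ideal.mem_sInf]
      intro q hq
      by_cases hqp : q = p
      · rw [hqp]; exact p.mul_mem_left _ hx
      · refine q.mul_mem_right _ ?_
        have : s.inf id ≤ q := Finset.inf_le (f := id)
          (Finset.mem_erase.2 ⟨hqp, hfin.mem_toFinset.2 hq⟩)
        exact this hg
    exact (mem_nilradical.1 this).eq_zero
  refine ⟨g, ?_⟩
  have hz2 : ∀ x ∈ p, algebraMap A (Localization.Away g) x = 0 := by
    intro x hx
    rw [IsLocalization.map_eq_zero_iff (Submonoid.powers g)]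
    exact ⟨⟨g, 1, by simp⟩, hz x hx⟩
  have hnt : Nontrivial (Localization.Away g) := by
    refine ⟨⟨0, 1, fun h => ?_⟩⟩
    have h2 : algebraMap A (Localization.Away g) 1 = 0 := by rw [map_one, h]
    rw [IsLocalization.map_eq_zero_iff (Submonoid.powers g)] at h2
    obtain ⟨⟨_, n, rfl⟩, h3⟩ := h2
    apply hgp
    refine hpp.mem_of_pow_mem n ?_
    have h4 : g ^ n = 0 := by simpa using h3
    rw [h4]; exact p.zero_mem
  have hnz : NoZeroDivisors (Localization.Away g) := by
    refine ⟨fun {a b} hab => ?_⟩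
    obtain ⟨n, x, hx⟩ := IsLocalization.Away.surj g a
    obtain ⟨m, y, hy⟩ := IsLocalization.Away.surj g b
    have hu : IsUnit (algebraMap A (Localization.Away g) g) := IsLocalization.Away.algebraMap_isUnit g
    have h2 : algebraMap A (Localization.Away g) (x * y) = 0 := by
      rw [map_mul, ← hx, ← hy, mul_mul_mul_comm, hab, zero_mul]
    rw [IsLocalization.map_eq_zero_iff (Submonoid.powers g)] at h2
    obtain ⟨⟨_, l, rfl⟩, h3⟩ := h2
    have h4 : g ^ l * (x * y) ∈ p := by rw [show g ^ l * (x * y) = 0 from h3]; exact p.zero_mem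
    have h5 : x * y ∈ p := (hpp.mem_or_mem h4).resolve_left fun h => hgp (hpp.mem_of_pow_mem _ h)
    rcases hpp.mem_or_mem h5 with h | h
    · left
      rw [hz2 x h] at hx
      exact ((hu.pow n).mul_left_eq_zero).1 hx
    · right
      rw [hz2 y h] at hy
      exact ((hu.pow m).mul_left_eq_zero).1 hy
  exact NoZeroDivisors.to_isDomain _

theorem WZ_irr_finite {k : Type u'} [Field k] [Finite k] (h : k[X]) (hh : h ≠ 0) :
    ∃ f : k[X], Irreducible f ∧ ringChar k ∣ f.natDegree ∧ ¬ f ∣ h := by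
  let p := ringChar k
  have : Fact p.Prime := ⟨CharP.char_is_prime k p⟩
  let r := p * (h.natDegree + 1)
  have : NeZero r := ⟨mul_ne_zero (Nat.Prime.ne_zero (Fact.out)) (Nat.succ_ne_zero _)⟩
  let E := FiniteField.Extension k p r
  have : Finite E := Module.finite_of_finite k
  obtain ⟨a, ha⟩ := Field.exists_primitive_element k E
  have hd : (minpoly k a).natDegree = r := by
    exact ((Field.primitive_element_iff_minpoly_natDegree_eq k a).1 ha).trans
      (FiniteField.finrank_extension k p r)
  refine ⟨minpoly k a, minpoly.irreducible (Algebra.IsIntegral.isIntegral a), ?_, ?_⟩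
  · rw [hd]; exact Dvd.intro _ rfl
  · intro hdvd
    have := Polynomial.natDegree_le_of_dvd hdvd hh
    rw [hd] at this
    have h2 : 0 < p := Nat.Prime.pos (Fact.out)
    have h3 : h.natDegree + 1 ≤ r := Nat.le_mul_of_pos_left _ h2
    omega

theorem WZ_irr_imperfect {k : Type u'} [Field k] (hk : ¬ PerfectField k) (h : k[X]) (hh : h ≠ 0) :
    ∃ f : k[X], Irreducible f ∧ ringChar k ∣ f.natDegree ∧ ¬ f ∣ h := by
  classical
  let p := ringChar k
  rcases CharP.char_is_prime_or_zero k p with hp | hp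
  · have : Fact p.Prime := ⟨hp⟩
    have : ExpChar k p := ExpChar.prime hp
    have hinf : Infinite k := by
      by_contra hfin
      rw [not_infinite_iff_finite] at hfin
      exact hk inferInstance
    have hns : ¬ Function.Surjective (frobenius k p) := by
      intro hs
      apply hk
      have : PerfectRing k p := PerfectRing.ofSurjective k p hs
      exact PerfectRing.toPerfectField k p
    obtain ⟨a, ha⟩ := not_forall.1 hns
    let f : k → k[X] := fun b => X ^ p - C (a + b ^ p)
    have hf : ∀ b, Irreducible (f b) := by
      intro b
      apply X_pow_sub_C_irreducible_of_prime hp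
      intro y hy
      apply ha
      refine ⟨y - b, ?_⟩
      rw [frobenius_def, sub_pow_expChar, hy, add_sub_cancel_right]
    have hm : ∀ b, (f b).Monic := fun b => monic_X_pow_sub_C _ hp.ne_zero
    have hinj : Function.Injective f := by
      intro b b' hb
      have h1 : C (a + b ^ p) = C (a + b' ^ p) := by
        have : X ^ p - C (a + b ^ p) = X ^ p - C (a + b' ^ p) := hb
        exact sub_right_injective this
      have h2 := add_left_cancel (C_injective h1)
      exact frobenius_inj k p h2
    by_contra hcon
    push Not at hcon
    have hall : ∀ b, f b ∣ h := by
      intro b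
      refine hcon (f b) (hf b) ?_
      rw [natDegree_X_pow_sub_C]
    have : ∀ b, f b ∈ UniqueFactorizationMonoid.normalizedFactors h := by
      intro b
      exact (Polynomial.mem_normalizedFactors_iff hh).2 ⟨hf b, hm b, hall b⟩
    exact (Set.infinite_range_of_injective hinj)
      ((UniqueFactorizationMonoid.normalizedFactors h).toFinset.finite_toSet.subset (by
        rintro _ ⟨b, rfl⟩
        exact Multiset.mem_toFinset.2 (this b)))
  · exfalso
    have : CharP k 0 := hp ▸ ringChar.charP k
    have : CharZero k := CharP.charP_to_charZero k
    exact hk inferInstance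
end


section
open Polynomial

theorem WZ_open_bot {P C : Type*} [CommRing P] [IsDomain P] [CommRing C] [IsDomain C] [Algebra P C]
    (hinj : Function.Injective (algebraMap P C))
    [Algebra.HasGoingDown P C] [Algebra.FinitePresentation P C] :
    ∃ h : P, h ≠ 0 ∧ ∀ (q : Ideal P) [q.IsPrime], h ∉ q → ∃ (Q : Ideal C), Q.IsPrime ∧
      Q.comap (algebraMap P C) = q := by
  have hop := PrimeSpectrum.isOpenMap_comap_of_hasGoingDown_of_finitePresentation (R := P) (S := C)
    _ isOpen_univ
  rw [Set.image_univ] at hop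
  have hmem : (⊥ : PrimeSpectrum P) ∈ Set.range (PrimeSpectrum.comap (algebraMap P C)) := by
    refine ⟨⊥, ?_⟩
    ext x
    change algebraMap P C x ∈ (⊥ : Ideal C) ↔ x ∈ (⊥ : Ideal P)
    rw [Ideal.mem_bot, Ideal.mem_bot, map_eq_zero_iff _ hinj]
  obtain ⟨_, ⟨_, ⟨h, rfl⟩, rfl⟩, hb, hsub⟩ :=
    PrimeSpectrum.isBasis_basic_opens.exists_subset_of_mem_open hmem hop
  refine ⟨h, ?_, ?_⟩
  · intro h0
    apply hb
    rw [h0]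
    exact Ideal.zero_mem _
  · intro q hq hhq
    obtain ⟨Q, hQ⟩ := hsub (show (⟨q, hq⟩ : PrimeSpectrum P) ∈ _ from hhq)
    exact ⟨Q.asIdeal, Q.isPrime, congrArg PrimeSpectrum.asIdeal hQ⟩

theorem WZ_trans_max {k : Type u'} [Field k] {B : Type u} [CommRing B] [IsDomain B] [Algebra k B]
    [Algebra.FiniteType k B] (n : ℕ)
    (hirr : ∀ h : k[X], h ≠ 0 → ∃ f : k[X], Irreducible f ∧ n ∣ f.natDegree ∧ ¬ f ∣ h)
    (t : B) (ht : Transcendental k t) : ∃ m : Ideal B, m.IsMaximal ∧ n ∣ Module.finrank k (B ⧸ m) := by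
  let : Algebra k[X] B := (aeval t).toAlgebra
  have hamap : ∀ p : k[X], algebraMap k[X] B p = aeval t p := fun p => rfl
  have : IsScalarTower k k[X] B := IsScalarTower.of_algebraMap_eq' (AlgHom.comp_algebraMap (aeval t)).symm
  have hinj : Function.Injective (algebraMap k[X] B) := transcendental_iff_injective.1 ht
  have : Module.IsTorsionFree k[X] B := by
    have : FaithfulSMul k[X] B := (faithfulSMul_iff_algebraMap_injective _ _).2 hinj
    infer_instance
  have : Module.Flat k[X] B := inferInstance
  have : Algebra.FiniteType k[X] B := Algebra.FiniteType.of_restrictScalars_finiteType k k[X] B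
  have : Algebra.FinitePresentation k[X] B := Algebra.FinitePresentation.of_finiteType.1 this
  obtain ⟨h, h0, hh⟩ := WZ_open_bot (P := k[X]) (C := B) hinj
  obtain ⟨f, hf, hn, hfh⟩ := hirr h h0
  have hpr : (Ideal.span {f}).IsPrime := (Ideal.span_singleton_prime hf.ne_zero).2 hf.prime
  obtain ⟨Q, hQ, hQf⟩ := hh (Ideal.span {f}) (by rwa [Ideal.mem_span_singleton])
  obtain ⟨m, hm, hQm⟩ := Ideal.exists_le_maximal Q hQ.ne_top
  refine ⟨m, hm, ?_⟩
  have hfm : aeval t f ∈ m := by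
    apply hQm
    have : f ∈ Q.comap (algebraMap k[X] B) := by rw [hQf]; exact Ideal.mem_span_singleton_self f
    exact this
  let : Field (B ⧸ m) := Ideal.Quotient.field m
  have : Module.Finite k (B ⧸ m) := finite_of_finite_type_of_isJacobsonRing k (B ⧸ m)
  have h1 : aeval (Ideal.Quotient.mkₐ k m t) f = 0 := by
    rw [aeval_algHom_apply]
    exact Ideal.Quotient.eq_zero_iff_mem.2 hfm
  have h2 := minpoly.eq_of_irreducible hf h1
  have h3 := minpoly.degree_dvd (K := k) (x := Ideal.Quotient.mkₐ k m t) (Algebra.IsIntegral.isIntegral _)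
  rw [← h2, natDegree_mul_C (inv_ne_zero (leadingCoeff_ne_zero.2 hf.ne_zero))] at h3
  exact hn.trans h3
end


section
open MvPolynomial

theorem WZ_ofList_ker {k : Type*} [Field k] {ι : Type*} [DecidableEq ι] (a : ι → k) (l : List ι)
    (f : MvPolynomial ι k) :
    f - aeval (fun i => if i ∈ l then C (a i) else X i) f ∈
      Ideal.ofList (l.map fun i => (X i - C (a i) : MvPolynomial ι k)) := by
  set I := Ideal.ofList (l.map fun i => (X i - C (a i) : MvPolynomial ι k)) with hI
  have h : (Ideal.Quotient.mkₐ k I) = (Ideal.Quotient.mkₐ k I).comp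
      (aeval (fun i => if i ∈ l then C (a i) else X i)) := by
    apply MvPolynomial.algHom_ext
    intro i
    rw [AlgHom.comp_apply, aeval_X]
    split_ifs with hi
    · refine Ideal.Quotient.eq.2 ?_
      rw [hI]
      exact Ideal.subset_span (List.mem_map.2 ⟨i, hi, rfl⟩)
    · rfl
  exact Ideal.Quotient.eq.1 (DFunLike.congr_fun h f)

theorem WZ_ofList_mem {k : Type*} [Field k] {ι : Type*} [DecidableEq ι] (a : ι → k) (l : List ι)
    (f : MvPolynomial ι k) :
    f ∈ Ideal.ofList (l.map fun i => (X i - C (a i) : MvPolynomial ι k)) ↔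
      aeval (fun i => if i ∈ l then C (a i) else X i) f = (0 : MvPolynomial ι k) := by
  constructor
  · intro hf
    have h2 : Ideal.ofList (l.map fun i => (X i - C (a i) : MvPolynomial ι k)) ≤
        RingHom.ker (aeval (fun i => if i ∈ l then C (a i) else X i) :
          MvPolynomial ι k →ₐ[k] MvPolynomial ι k) := by
      refine Ideal.span_le.2 ?_
      intro y hy
      obtain ⟨i, hi, rfl⟩ := List.mem_map.1 hy
      rw [SetLike.mem_coe, RingHom.mem_ker, map_sub, aeval_X, if_pos hi, aeval_C]
      exact sub_self _
    exact h2 hf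
  · intro hf
    have := WZ_ofList_ker a l f
    rwa [hf, sub_zero] at this

theorem WZ_poly_regular {k : Type*} [Field k] {ι : Type*} (a : ι → k) (l : List ι)
    (hl : l.Nodup) : RingTheory.Sequence.IsWeaklyRegular (MvPolynomial ι k)
      (l.map fun i => (X i - C (a i) : MvPolynomial ι k)) := by
  classical
  induction l using List.reverseRecOn with
  | nil => simp
  | append_singleton l j ih =>
    have hj : j ∉ l := by
      intro h
      exact (List.disjoint_of_nodup_append hl) h (List.mem_singleton_self j)
    rw [List.map_append, RingTheory.Sequence.isWeaklyRegular_append_iff]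
    refine ⟨ih (List.Nodup.of_append_left hl), ?_⟩
    rw [List.map_singleton, RingTheory.Sequence.isWeaklyRegular_singleton_iff]
    rw [isSMulRegular_iff_right_eq_zero_of_smul]
    intro y hy
    obtain ⟨f, rfl⟩ := Submodule.Quotient.mk_surjective _ y
    rw [← Submodule.Quotient.mk_smul, Submodule.Quotient.mk_eq_zero, smul_eq_mul,
      Ideal.mul_top, smul_eq_mul] at hy
    rw [Submodule.Quotient.mk_eq_zero, smul_eq_mul, Ideal.mul_top]
    rw [WZ_ofList_mem] at hy ⊢
    rw [map_mul, map_sub, aeval_X, if_neg hj, aeval_C] at hy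
    refine (mul_eq_zero.1 hy).resolve_left ?_
    intro h0
    have h1 := congrArg (MvPolynomial.eval fun i => a i + 1) h0
    simp [MvPolynomial.algebraMap_eq] at h1

theorem WZ_etale_point {k : Type u'} [Field k] [Infinite k] {ι : Type u2} [Finite ι]
    {C : Type u} [CommRing C] [IsDomain C] [Algebra k C] [Algebra (MvPolynomial ι k) C]
    [IsScalarTower k (MvPolynomial ι k) C] [Algebra.Etale (MvPolynomial ι k) C]
    (hinj : Function.Injective (algebraMap (MvPolynomial ι k) C)) :
    ∃ rs : List C, RingTheory.Sequence.IsWeaklyRegular C rs ∧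
      Module.Finite k (C ⧸ Ideal.ofList rs) ∧ IsReduced (C ⧸ Ideal.ofList rs) ∧
      Nontrivial (C ⧸ Ideal.ofList rs) := by
  classical
  have := Fintype.ofFinite ι
  have : Module.Flat (MvPolynomial ι k) C := inferInstance
  obtain ⟨h, h0, hh⟩ := WZ_open_bot (P := MvPolynomial ι k) (C := C) hinj
  obtain ⟨a, ha⟩ : ∃ a : ι → k, eval a h ≠ 0 := by
    by_contra hcon
    push Not at hcon
    exact h0 (MvPolynomial.funext fun a => by rw [hcon a, map_zero])
  let l : List ι := Finset.univ.toList
  have hmem : ∀ i, i ∈ l := fun i => by simp [l]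
  let L : List (MvPolynomial ι k) := l.map fun i => (X i - MvPolynomial.C (a i))
  let I : Ideal (MvPolynomial ι k) := Ideal.ofList L
  have hIk : I = RingHom.ker (aeval a : MvPolynomial ι k →ₐ[k] k) := by
    ext f
    rw [RingHom.mem_ker]
    change f ∈ Ideal.ofList _ ↔ _
    rw [WZ_ofList_mem]
    have h1 : (aeval (fun i => if i ∈ l then MvPolynomial.C (a i) else X i) :
        MvPolynomial ι k →ₐ[k] MvPolynomial ι k) = (Algebra.ofId k _).comp (aeval a) := by
      apply MvPolynomial.algHom_ext
      intro i
      rw [aeval_X, if_pos (hmem i), AlgHom.comp_apply, aeval_X]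
      rfl
    rw [h1, AlgHom.comp_apply]
    change algebraMap k (MvPolynomial ι k) _ = 0 ↔ _
    rw [map_eq_zero_iff _ (algebraMap k (MvPolynomial ι k)).injective]
  have hsurj : Function.Surjective (aeval a : MvPolynomial ι k →ₐ[k] k) := fun r =>
    ⟨MvPolynomial.C r, by simp⟩
  have hImax : I.IsMaximal := by
    rw [hIk]
    exact RingHom.ker_isMaximal_of_surjective _ hsurj
  have hIfin : Module.Finite k (MvPolynomial ι k ⧸ I) := by
    rw [hIk]
    exact Module.Finite.equiv (Ideal.quotientKerAlgEquivOfSurjective hsurj).symm.toLinearEquiv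
  have hhI : h ∉ I := by
    rw [hIk, RingHom.mem_ker]
    rwa [MvPolynomial.aeval_eq_eval]
  obtain ⟨Q, hQ, hQI⟩ := hh I hhI
  let : Field (MvPolynomial ι k ⧸ I) := Ideal.Quotient.field I
  let J := I.map (algebraMap (MvPolynomial ι k) C)
  have hJ : Ideal.ofList (L.map (algebraMap (MvPolynomial ι k) C)) = J :=
    (Ideal.map_ofList _ _).symm
  refine ⟨L.map (algebraMap (MvPolynomial ι k) C), ?_, ?_⟩
  · exact (WZ_poly_regular a l (Finset.nodup_toList _)).of_flat
  · rw [hJ]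
    have h1 : IsReduced (C ⧸ J) :=
      Algebra.FormallyUnramified.isReduced_of_field (MvPolynomial ι k ⧸ I) (C ⧸ J)
    have h2 : Module.Finite (MvPolynomial ι k ⧸ I) (C ⧸ J) :=
      Algebra.FormallyUnramified.finite_of_free _ _
    have h3 : IsScalarTower k (MvPolynomial ι k ⧸ I) (C ⧸ J) := by
      refine IsScalarTower.of_algebraMap_eq fun r => ?_
      change Ideal.Quotient.mk J (algebraMap k C r) =
        Ideal.Quotient.mk J (algebraMap (MvPolynomial ι k) C (algebraMap k _ r))
      rw [← IsScalarTower.algebraMap_apply]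
    refine ⟨Module.Finite.trans (MvPolynomial ι k ⧸ I) _, h1, ?_⟩
    refine Ideal.Quotient.nontrivial_iff.2 fun htop => hQ.ne_top ?_
    rw [eq_top_iff, ← htop]
    exact Ideal.map_le_iff_le_comap.2 hQI.ge
end


section

theorem WZ_etale_away {P B K0 K : Type*} [CommRing P] [IsDomain P] [CommRing B] [IsDomain B]
    [Algebra P B] [Algebra.FinitePresentation P B] [Field K0] [Field K] [Algebra P K0]
    [IsFractionRing P K0] [Algebra B K] [IsFractionRing B K] [Algebra P K] [IsScalarTower P B K]
    [Algebra K0 K] [IsScalarTower P K0 K] [Algebra.IsSeparable K0 K] :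
    ∃ f : B, f ≠ 0 ∧ Algebra.Etale P (Localization.Away f) := by
  have h1 : Algebra.FormallyEtale P K0 := Algebra.FormallyEtale.of_isLocalization (nonZeroDivisors P)
  have h2 : Algebra.FormallyEtale K0 K := Algebra.FormallyEtale.of_isSeparable K0 K
  have h3 : Algebra.FormallyEtale P K := Algebra.FormallyEtale.comp P K0 K
  have hpc : (⊥ : Ideal B).primeCompl = nonZeroDivisors B := by
    ext x
    rw [Ideal.mem_primeCompl_iff, Ideal.mem_bot, mem_nonZeroDivisors_iff_ne_zero]
  have h4 : IsLocalization (⊥ : Ideal B).primeCompl K := by rw [hpc]; infer_instance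
  let E : K ≃ₐ[B] Localization.AtPrime (⊥ : Ideal B) :=
    IsLocalization.algEquiv (⊥ : Ideal B).primeCompl _ _
  have h5 : Algebra.IsEtaleAt P (⊥ : Ideal B) :=
    Algebra.FormallyEtale.of_equiv (E.restrictScalars P)
  obtain ⟨f, hf, hfe⟩ := Algebra.exists_etale_of_isEtaleAt (R := P) (⊥ : Ideal B)
  exact ⟨f, fun h => hf (by rw [h]; exact Ideal.zero_mem _), hfe⟩

def WZ_good (k : Type u') [Field k] (A : Type u) [CommRing A] [Algebra k A] : Prop :=
  ∃ (g : A) (C : Type u) (_ : CommRing C) (_ : Algebra A C) (_ : IsLocalization.Away g C)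
    (_ : Algebra k C) (_ : IsScalarTower k A C) (rs : List C),
    RingTheory.Sequence.IsWeaklyRegular C rs ∧
      Module.Finite k (C ⧸ Ideal.ofList rs) ∧ IsReduced (C ⧸ Ideal.ofList rs) ∧
      Nontrivial (C ⧸ Ideal.ofList rs)

theorem WZ_good_of_away {k : Type u'} [Field k] {A B : Type u} [CommRing A] [Algebra k A]
    [CommRing B] [Algebra k B] [Algebra A B] [IsScalarTower k A B] (b : A) [IsLocalization.Away b B]
    (h : WZ_good k B) : WZ_good k A := by
  obtain ⟨g, C, _, _, _, _, _, rs, h1⟩ := h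
  obtain ⟨n, z, hz⟩ := IsLocalization.Away.surj b g
  let : Algebra A C := ((algebraMap B C).comp (algebraMap A B)).toAlgebra
  have : IsScalarTower A B C := IsScalarTower.of_algebraMap_eq fun _ => rfl
  have hu : IsUnit (algebraMap A B b) := IsLocalization.Away.algebraMap_isUnit b
  have hass : Associated (algebraMap A B z) g := by
    rw [← hz]
    exact (associated_mul_isUnit_left_iff (hu.pow n)).2 (Associated.refl g)
  have hloc : IsLocalization.Away (b * z) C := IsLocalization.Away.mul_of_associated b z g hass
  have htow : IsScalarTower k A C := by
    refine IsScalarTower.of_algebraMap_eq fun r => ?_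
    rw [IsScalarTower.algebraMap_apply A B C, ← IsScalarTower.algebraMap_apply k A B,
      ← IsScalarTower.algebraMap_apply k B C]
  exact ⟨b * z, C, _, _, hloc, _, htow, rs, h1⟩

theorem WZ_good_basis {k : Type u'} [Field k] [Infinite k] {B : Type u} [CommRing B] [IsDomain B]
    [Algebra k B] [Algebra.FiniteType k B] {K : Type u} [Field K] [Algebra B K] [IsFractionRing B K]
    [Algebra k K] [IsScalarTower k B K] {ι : Type u2} [Finite ι] (t : ι → B)
    (ht : AlgebraicIndependent k (fun i => algebraMap B K (t i)))
    (hsep : Algebra.IsSeparable (IntermediateField.adjoin k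
      (Set.range (fun i => algebraMap B K (t i)))) K) : WZ_good k B := by
  let P := MvPolynomial ι k
  let y : ι → K := fun i => algebraMap B K (t i)
  let K0 := IntermediateField.adjoin k (Set.range y)
  let : Algebra P B := (MvPolynomial.aeval t).toAlgebra
  have htkPB : IsScalarTower k P B :=
    IsScalarTower.of_algebraMap_eq' (AlgHom.comp_algebraMap (MvPolynomial.aeval t)).symm
  let : Algebra P K := ((algebraMap B K).comp (algebraMap P B)).toAlgebra
  have : IsScalarTower P B K := IsScalarTower.of_algebraMap_eq fun _ => rfl
  have hPK : ∀ p : P, algebraMap P K p = MvPolynomial.aeval y p := by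
    intro p
    change algebraMap B K (MvPolynomial.aeval t p) = _
    exact (MvPolynomial.aeval_algebraMap_apply _ _ _).symm
  have hinjK : Function.Injective (algebraMap P K) := by
    have h := algebraicIndependent_iff_injective_aeval.1 ht
    intro a b hab
    rw [hPK, hPK] at hab
    exact h hab
  have hinjB : Function.Injective (algebraMap P B) := by
    have : Function.Injective ((algebraMap B K) ∘ (algebraMap P B)) := hinjK
    exact this.of_comp
  let : Algebra P K0 := ((ht.aevalEquivField : FractionRing P →+* K0).comp
    (algebraMap P (FractionRing P))).toAlgebra
  have : IsScalarTower P K0 K := by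
    refine IsScalarTower.of_algebraMap_eq fun p => ?_
    rw [hPK]
    exact (ht.aevalEquivField_algebraMap_apply_coe p).symm
  let E : FractionRing P ≃ₐ[P] K0 := AlgEquiv.ofRingEquiv
    (f := (ht.aevalEquivField : FractionRing P ≃+* K0)) (fun _ => rfl)
  have : IsFractionRing P K0 := IsLocalization.isLocalization_of_algEquiv (nonZeroDivisors P) E
  have : Algebra.IsSeparable K0 K := hsep
  have : Algebra.FiniteType P B := Algebra.FiniteType.of_restrictScalars_finiteType k P B
  have : Algebra.FinitePresentation P B := Algebra.FinitePresentation.of_finiteType.1 this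
  obtain ⟨f, hf, het⟩ := WZ_etale_away (P := P) (B := B) (K0 := K0) (K := K)
  have hle : Submonoid.powers f ≤ nonZeroDivisors B := powers_le_nonZeroDivisors_of_noZeroDivisors hf
  have hdom : IsDomain (Localization.Away f) := IsLocalization.isDomain_localization hle
  have hinj2 : Function.Injective (algebraMap P (Localization.Away f)) := by
    rw [IsScalarTower.algebraMap_eq P B (Localization.Away f)]
    exact (IsLocalization.injective _ hle).comp hinjB
  have htow : IsScalarTower k P (Localization.Away f) := by
    refine IsScalarTower.of_algebraMap_eq fun r => ?_
    rw [IsScalarTower.algebraMap_apply P B (Localization.Away f), ← IsScalarTower.algebraMap_apply k P B,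
      ← IsScalarTower.algebraMap_apply k B]
  obtain ⟨rs, hrs⟩ := WZ_etale_point (k := k) (ι := ι) (C := Localization.Away f) hinj2
  exact ⟨f, Localization.Away f, _, _, inferInstance, _, inferInstance, rs, hrs⟩

theorem WZ_good_perfect {k : Type u'} [Field k] [PerfectField k] [Infinite k] {B : Type u}
    [CommRing B] [IsDomain B] [Algebra k B] [Algebra.FiniteType k B] : WZ_good k B := by
  let K := FractionRing B
  have : Algebra.EssFiniteType B K := Algebra.EssFiniteType.of_isLocalization K (nonZeroDivisors B)
  have : Algebra.EssFiniteType k K := Algebra.EssFiniteType.comp k B K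
  obtain ⟨s, hs, hsep⟩ := exists_isTranscendenceBasis_and_isSeparable_of_perfectField k K
  obtain ⟨⟨b, hb⟩, hbs⟩ := IsLocalization.exist_integer_multiples_of_finset (nonZeroDivisors B) s
  have hb0 : b ≠ 0 := nonZeroDivisors.ne_zero hb
  let B' := Localization.Away b
  have hle : Submonoid.powers b ≤ nonZeroDivisors B := powers_le_nonZeroDivisors_of_noZeroDivisors hb0
  have hdom : IsDomain B' := IsLocalization.isDomain_localization hle
  have hbK : IsUnit (algebraMap B K b) := by
    rw [isUnit_iff_ne_zero]
    exact fun h => hb0 ((map_eq_zero_iff _ (IsFractionRing.injective B K)).1 h)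
  let : Algebra B' K := (IsLocalization.Away.lift (S := B') b hbK).toAlgebra
  have : IsScalarTower B B' K := IsScalarTower.of_algebraMap_eq fun x =>
    (IsLocalization.Away.lift_eq b hbK x).symm
  have : IsFractionRing B' K :=
    IsFractionRing.isFractionRing_of_isDomain_of_isLocalization (Submonoid.powers b) B' K
  have : IsScalarTower k B' K := by
    refine IsScalarTower.of_algebraMap_eq fun r => ?_
    rw [IsScalarTower.algebraMap_apply k B K, IsScalarTower.algebraMap_apply B B' K,
      IsScalarTower.algebraMap_apply k B B']
  have hft : Algebra.FiniteType k B' :=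
    (have : Algebra.FinitePresentation k B := Algebra.FinitePresentation.of_finiteType.1 inferInstance
     have : Algebra.FinitePresentation k (Localization.Away b) := .of_isLocalizationAway b
     inferInstance)
  have hex : ∀ i : s, ∃ z : B', algebraMap B' K z = i := by
    intro i
    obtain ⟨z, hz⟩ := hbs i i.2
    refine ⟨algebraMap B B' z * IsLocalization.Away.invSelf b, ?_⟩
    have h1 : algebraMap B' K (IsLocalization.Away.invSelf b) * algebraMap B K b = 1 := by
      rw [IsScalarTower.algebraMap_apply B B' K, ← map_mul, mul_comm, IsLocalization.Away.mul_invSelf,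
        map_one]
    rw [map_mul, ← IsScalarTower.algebraMap_apply B B' K, hz]
    change (b • (i : K)) * _ = _
    rw [Algebra.smul_def, mul_right_comm, mul_comm (algebraMap B K b), h1, one_mul]
  choose t ht using hex
  have hfun : (fun i => algebraMap B' K (t i)) = ((↑) : s → K) := funext ht
  refine WZ_good_of_away b (WZ_good_basis (K := K) t ?_ ?_)
  · rw [hfun]; exact hs.1
  · rw [hfun]
    convert! hsep <;> simp

theorem WZ_good_domain {k : Type u'} [Field k] {B : Type u} [CommRing B] [IsDomain B]
    [Algebra k B] [Algebra.FiniteType k B]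
    (hres : ∀ (m : Ideal B), m.IsMaximal → ¬ ringChar k ∣ Module.finrank k (B ⧸ m)) :
    WZ_good k B := by
  by_cases hk : PerfectField k ∧ Infinite k
  · have := hk.1
    have := hk.2
    exact WZ_good_perfect
  · have hirr : ∀ h : Polynomial k, h ≠ 0 → ∃ f : Polynomial k, Irreducible f ∧
        ringChar k ∣ f.natDegree ∧ ¬ f ∣ h := by
      rw [not_and_or] at hk
      rcases hk with hk | hk
      · exact WZ_irr_imperfect hk
      · have := not_infinite_iff_finite.1 hk
        exact WZ_irr_finite
    have halg : Algebra.IsAlgebraic k B := by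
      refine ⟨fun t => ?_⟩
      by_contra ht
      obtain ⟨m, hm, h1⟩ := WZ_trans_max (ringChar k) hirr t ht
      exact hres m hm h1
    have hint : Algebra.IsIntegral k B := Algebra.isAlgebraic_iff_isIntegral.1 halg
    have hfin : Module.Finite k B := Algebra.IsIntegral.finite
    have : IsLocalization.Away (1 : B) B := IsLocalization.away_of_isUnit_of_bijective B isUnit_one
      Function.bijective_id
    refine ⟨1, B, _, _, this, _, inferInstance, [], by simp, ?_⟩
    have e : (B ⧸ Ideal.ofList ([] : List B)) ≃+* B :=
      (Ideal.quotEquivOfEq Ideal.ofList_nil).trans (RingEquiv.quotientBot B)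
    exact ⟨inferInstance, isReduced_of_injective e.toRingHom e.injective, e.toEquiv.nontrivial⟩

theorem WZ_F {k : Type u'} [Field k] {A : Type u} [CommRing A] [Algebra k A]
    [Algebra.FiniteType k A] [IsReduced A] [Nontrivial A]
    (hres : ∀ (m : Ideal A), m.IsMaximal → ¬ ringChar k ∣ Module.finrank k (A ⧸ m)) :
    WZ_good k A := by
  have : IsNoetherianRing A := Algebra.FiniteType.isNoetherianRing k A
  have : IsJacobsonRing A := isJacobsonRing_of_finiteType (A := k)
  obtain ⟨g, hg⟩ := WZ_exists_domain A
  let B := Localization.Away g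
  have hft : Algebra.FiniteType k B :=
    (have : Algebra.FinitePresentation k A := Algebra.FinitePresentation.of_finiteType.1 inferInstance
     have : Algebra.FinitePresentation k (Localization.Away g) := .of_isLocalizationAway g
     inferInstance)
  refine WZ_good_of_away (B := B) g (WZ_good_domain ?_)
  intro m hm
  have hm' := ((IsLocalization.isMaximal_iff_isMaximal_disjoint B g m).1 hm).1
  have hsurj := IsLocalization.surjective_quotientMap_of_maximal_of_localization
    (Submonoid.powers g) B (I := m) (H := le_rfl) hm'
  have hinj : Function.Injective (Ideal.quotientMap m (algebraMap A B) (le_refl (m.under A))) :=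
    Ideal.quotientMap_injective
  let φ : (A ⧸ m.under A) →ₐ[k] (B ⧸ m) := Ideal.quotientMapₐ m (Algebra.ofId A B |>.restrictScalars k) le_rfl
  have e : (A ⧸ m.under A) ≃ₐ[k] (B ⧸ m) := AlgEquiv.ofBijective φ ⟨hinj, hsurj⟩
  rw [← e.toLinearEquiv.finrank_eq]
  exact hres _ hm'
end


section

theorem WZ_main_center {k : Type u'} [Field k] {H Z : Type u} [Ring H] [Nontrivial H] [CommRing Z]
    [Algebra k H] [Algebra k Z] (φ : Z →ₐ[k] H) (hcomm : ∀ z y, φ z * y = y * φ z)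
    (hinj' : Function.Injective φ)
    (hcen' : ∀ h ∈ Set.center H, ∃ z, φ z = h)
    (haff : Algebra.FiniteType k H) (hnoeth : IsNoetherianRing H)
    (hs : ∀ a : H, (∀ x : H, a * x * a = 0) → a = 0)
    (hirr : ∀ (M : Type u) [AddCommGroup M] [Module H M] [Module k M]
      [IsScalarTower k H M], IsSimpleModule H M → FiniteDimensional k M →
        ¬ ((ringChar k : ℕ) ∣ Module.finrank k M))
    (d : ℕ) (α : Equiv.Perm (Fin d) → k) (hα1 : α 1 ≠ 0)
    (hα : ∀ x : Fin d → H, ∑ σ, α σ • (List.ofFn fun i => x (σ i)).prod = 0) :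
    ∃ (V : Type u) (_ : AddCommGroup V) (_ : Module H V) (_ : Module k V) (_ : IsScalarTower k H V),
      IsSimpleModule H V ∧ Module.Finite k V ∧ ∃ n, WZ_PD H (n + 1) V := by
  let : Algebra Z H := RingHom.toAlgebra' φ.toRingHom hcomm
  have : IsScalarTower k Z H := IsScalarTower.of_algebraMap_eq fun r => (φ.commutes r).symm
  have hinj : Function.Injective (algebraMap Z H) := hinj'
  have hcen : ∀ h ∈ Set.center H, ∃ z, algebraMap Z H z = h := hcen'
  obtain ⟨N, x, e, c', hc0, hcc, hz, hx', hc'⟩ := WZ_PI_structure hs d α hα1 hα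
  obtain ⟨c, rfl⟩ := hcen c' hcc
  have hz' : ∀ i a, ∃ z : Z, algebraMap Z H z = ∑ j, e j * (a * e i) * x j :=
    fun i a => hcen _ (hz i a)
  choose z hz2 using hz'
  let ζ : Fin N → H →ₗ[Z] Z := fun i =>
    { toFun := z i
      map_add' := by
        intro a b
        apply hinj
        rw [map_add, hz2, hz2, hz2, ← Finset.sum_add_distrib]
        exact Finset.sum_congr rfl fun j _ => by rw [add_mul, mul_add, add_mul]
      map_smul' := by
        intro r a
        apply hinj
        rw [RingHom.id_apply, smul_eq_mul, map_mul, hz2, hz2, ← Algebra.smul_def, Finset.smul_sum]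
        exact Finset.sum_congr rfl fun j _ => by
          rw [smul_mul_assoc, mul_smul_comm, smul_mul_assoc] }
  have hζ : ∀ i h, algebraMap Z H (ζ i h) = ∑ j, e j * (h * e i) * x j := fun i h => hz2 i h
  have hc : ∀ h : H, c • h = ∑ i, ζ i h • x i := by
    intro h
    rw [Algebra.smul_def, hc']
    exact Finset.sum_congr rfl fun i _ => by rw [Algebra.smul_def, hζ]
  have hx : ∀ i, ζ i (x i) = c := by
    intro i
    apply hinj
    rw [hζ, hx', if_pos rfl]
  have hN : Nonempty (Fin N) := by
    by_contra hN
    rw [not_nonempty_iff] at hN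
    apply hc0
    have := hc' 1
    rwa [Finset.univ_eq_empty, Finset.sum_empty, mul_one] at this
  obtain ⟨i⟩ := hN
  have hredZ : IsReduced Z := by
    rw [isReduced_iff_pow_one_lt 2 one_lt_two]
    intro y hy
    apply hinj
    rw [map_zero]
    apply hs
    intro a
    rw [mul_assoc, ← Algebra.commutes, ← mul_assoc, ← map_mul, ← pow_two, hy, map_zero, zero_mul]
  let A := Localization.Away c
  have hredA : IsReduced A := isReduced_localizationPreserves (Submonoid.powers c) A hredZ
  have hntA : Nontrivial A := by
    refine ⟨⟨0, 1, fun h => ?_⟩⟩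
    have h2 : algebraMap Z A 1 = 0 := by rw [map_one, h]
    rw [IsLocalization.map_eq_zero_iff (Submonoid.powers c)] at h2
    obtain ⟨⟨_, n, rfl⟩, h3⟩ := h2
    have h4 : c ^ n = 0 := by simpa using h3
    apply hc0
    rw [eq_zero_of_pow_eq_zero h4, map_zero]
  have hftA : Algebra.FiniteType k A := WZ_affine x ζ c i hc hx A haff
  obtain ⟨g, C, _, _, _, _, _, rs, h1, h2, h3, h4⟩ := WZ_F (k := k) (A := A) (by
    intro m hm
    let : Field (A ⧸ m) := Ideal.Quotient.field m
    have : Module.Finite k (A ⧸ m) := finite_of_finite_type_of_isJacobsonRing k (A ⧸ m)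
    exact WZ_residue x e ζ c i hc hx hζ A m hirr)
  obtain ⟨n, y, hy⟩ := IsLocalization.Away.surj c g
  let : Algebra Z C := ((algebraMap A C).comp (algebraMap Z A)).toAlgebra
  have : IsScalarTower Z A C := IsScalarTower.of_algebraMap_eq fun _ => rfl
  have hu : IsUnit (algebraMap Z A c) := IsLocalization.Away.algebraMap_isUnit c
  have hass : Associated (algebraMap Z A y) g := by
    rw [← hy]
    exact (associated_mul_isUnit_left_iff (hu.pow n)).2 (Associated.refl g)
  have hloc : IsLocalization.Away (c * y) C := IsLocalization.Away.mul_of_associated c y g hass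
  have htow : IsScalarTower k Z C := by
    refine IsScalarTower.of_algebraMap_eq fun r => ?_
    rw [IsScalarTower.algebraMap_apply Z A C, ← IsScalarTower.algebraMap_apply k Z A,
      ← IsScalarTower.algebraMap_apply k A C]
  have huC : IsUnit (algebraMap Z C c) := by
    rw [IsScalarTower.algebraMap_apply Z A C]
    exact hu.map _
  obtain ⟨V, hV1, hV2, hV3⟩ := WZ_descent (k := k) x e ζ c i hc hx hζ (c * y) C huC rs h1 h2 h3 h4
  exact ⟨V, inferInstance, inferInstance, inferInstance, inferInstance, hV1, hV2, hV3⟩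

theorem WZ_main {k : Type u'} [Field k] {H : Type u} [Ring H] [HopfAlgebra k H]
    (haff : Algebra.FiniteType k H) (hnoeth : IsNoetherianRing H)
    (hinv : ∀ h : H, HopfAlgebra.antipode (R := k) (HopfAlgebra.antipode (R := k) h) = h)
    (hs : ∀ a : H, (∀ x : H, a * x * a = 0) → a = 0)
    (hirr : ∀ (M : Type u) [AddCommGroup M] [Module H M] [Module k M]
      [IsScalarTower k H M], IsSimpleModule H M → FiniteDimensional k M →
        ¬ ((ringChar k : ℕ) ∣ Module.finrank k M))
    (m : ℕ) (f : FreeAlgebra k (Fin m)) (hf : f ≠ 0)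
    (h : ∀ v : Fin m → H, FreeAlgebra.lift k v f = 0) :
    ∃ n, ∀ (X : Type u) [AddCommGroup X] [Module H X], WZ_PD H (n + 1) X := by
  have hnt : Nontrivial H := (Bialgebra.counitAlgHom k H).toRingHom.domain_nontrivial
  obtain ⟨d, α, hα1, hα⟩ := WZ_multilinearize m f hf h
  let Z := Subalgebra.center k H
  obtain ⟨V, _, _, _, _, hV1, hV2, n, hn⟩ := WZ_main_center (k := k) (H := H) (Z := Z)
    Z.val (fun c y => ((Subalgebra.mem_center_iff.1 c.2) y).symm) Subtype.val_injective (fun h hh => ⟨⟨h, hh⟩, rfl⟩) haff hnoeth hs hirr d α hα1 hα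
  have hV : (Module.finrank k V : k) ≠ 0 := by
    intro h0
    exact hirr V hV1 hV2 ((ringChar.spec k _).1 h0)
  refine ⟨n, fun X _ _ => ?_⟩
  let : Module k X := Module.compHom X (algebraMap k H)
  have : IsScalarTower k H X := ⟨fun r a y => by
    rw [Algebra.smul_def, mul_smul]; rfl⟩
  exact WZ_PD_all (k := k) (V := V) hinv hV n hn
end

theorem regular_of_involutory_semiprime_PI_hopf
    (k : Type u') [Field k] (H : Type u) [Ring H] [HopfAlgebra k H]
    (haff : Algebra.FiniteType k H)
    (hnoeth : IsNoetherianRing H) (hnoeth' : IsNoetherianRing Hᵐᵒᵖ)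
    (hPI : SatisfiesPolynomialIdentity k H)
    (hinv : ∀ h : H, HopfAlgebra.antipode (R := k) (HopfAlgebra.antipode (R := k) h) = h)
    (hsemiprime : IsSemiprimeRing H)
    (hirr : ∀ (M : Type u) [AddCommGroup M] [Module H M] [Module k M]
      [IsScalarTower k H M], IsSimpleModule H M → FiniteDimensional k M →
        ¬ ((ringChar k : ℕ) ∣ Module.finrank k M)) :
    HasFiniteGlobalDimension H := by
  obtain ⟨m, f, hf, hm⟩ := hPI
  obtain ⟨n, hn⟩ := WZ_main (k := k) (H := H) haff hnoeth hinv hsemiprime hirr m f hf hm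
  refine ⟨n, ?_⟩
  intro M N _ _ _ _ i hi
  have h1 : WZ_PD H (n + 1) (ULift.{u} M) := hn _
  have h2 : HasProjectiveDimensionLT (ModuleCat.of H (ULift.{u} M)) (n + 1) := h1
  exact HasProjectiveDimensionLT.subsingleton _ (n + 1) i hi _
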